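/- Let q = p^f be a power of a prime p, take the prime v = t, fix an integer k > 0, and for d ≥ 0 set ν_d(k) := v_t(S̃_d(-k)), the t-adic valuation of the restricted power sum S̃_d(-k). Then S̃_d(-k) ≠ 0 for all 0 ≤ d ≤ ⌊L_k⌋ + 1, and ν_{⌊L_k⌋+1}(k) > ν_{⌊L_k⌋}(k) > … > ν_1(k) ≥ ν_0(k) = 0. -/

import Mathlib

/-!
Write `q = p ^ f`. Expanding `a ^ k` along the base-`p` digits of `k` turns the restricted power sum
into `∑ M, coef M * t ^ weight M`, where `M` runs over the ways to distribute the digits of `k` over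
the columns `0, …, d` (column `i` going with the coefficient of `t ^ (d - i)`). The coefficient is
nonzero exactly when the columns `1, …, d` are divisible by `q - 1` and those strictly between `0`
and `d` are nonzero (`coef_ne_zero`). The heart of the matter is that for `d ≤ ⌊L_k⌋ + 1` there is a
valid matrix and only one of least weight (`exists_unique_min`), so that nothing cancels in lowest
degree and the valuation is that weight. Strict monotonicity is then immediate: merging the last two
columns of the optimal matrix for `d + 1` gives a valid matrix for `d` of smaller weight
(`merge_spec`).

For the uniqueness, regard a digit at position `j` as a supply of coins of denomination `p ^ j` and of
class `j` modulo `f`. The weight of a matrix is the sum of the values of its prefix sums. Modulo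
`q - 1` the value of a set of coins depends only on its numbers of coins of each class, and within a
fixed residue class the possible count vectors are `cnt x` for integer vectors `x` indexed by
`ZMod f`; here `x` is the vector of quotients by `q - 1` of the cyclic weighted sums of the counts.
Valid matrices yield chains `x_0 < x_1 < …` with steps at least one in every coordinate, bounded by
the vector `pot` of quotients for all of `k`. For given counts the cheapest set of coins is unique
and consists of the smallest coins; its value `w x` is injective and submodular in `x`.

The optimal chain is the greedy one (`greedy_optimal`): choose the top vector as cheap as possible,
then the next one, and so on. Moving the top vector up from its minimum, with a coin gained at
position `Z` at the top, costs at least `(1 - 1 / p) p ^ Z` (`jump`). The lower vectors can only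
lose coins at positions at most `Z - f`, then `Z - 2 f`, and so on (`gap`), and these savings are too small to
compensate (`key_strict`). Finally the counts of the greedy chain are nested (`cnt_le_of_nested`),
so it does come from a matrix, and the greedy chain exists as soon as all quotients in `pot` are at
least `d - 1`; this follows from `d ≤ ⌊L_k⌋ + 1` since base-`q` digit sums are subadditive
(`dsum_le_CC`).
-/

open Polynomial

open scoped Classical

/-- The monic polynomial `X^d + c_{d-1} X^{d-1} + ... + c_0` determined by its lower
coefficients `c : Fin d → F`; these parametrize the monic polynomials of degree `d`. -/
noncomputable def monicPoly (F : Type) [Field F] (d : ℕ) (c : Fin d → F) : F[X] :=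
  X ^ d + ∑ i : Fin d, C (c i) * X ^ (i : ℕ)

/-- `S_d(-k) = Σ_{a monic of degree d} a^k`. -/
noncomputable def powerSum (F : Type) [Field F] [Fintype F] (d k : ℕ) : F[X] :=
  ∑ c : Fin d → F, monicPoly F d c ^ k

/-- `S̃_d(-k) = Σ_{a monic of degree d, v ∤ a} a^k`. -/
noncomputable def rPowerSum (F : Type) [Field F] [Fintype F] (v : F[X]) (d k : ℕ) : F[X] :=
  ∑ c : Fin d → F, if v ∣ monicPoly F d c then 0 else monicPoly F d c ^ k

/-- `∑ i, m i = k` with no carrying of base-`p` digits. -/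
def NoCarry (p : ℕ) {n : ℕ} (m : Fin n → ℕ) (k : ℕ) : Prop :=
  (∑ i, m i = k) ∧
    ∀ j : ℕ, (∑ i, (Nat.digits p (m i)).getD j 0) = (Nat.digits p k).getD j 0

/-- `U_d(k)`. -/
def Uset (p q d k : ℕ) : Set (Fin (d + 1) → ℕ) :=
  {m | NoCarry p m k ∧ ∀ i : Fin (d + 1), 0 < (i : ℕ) → 0 < m i ∧ (q - 1) ∣ m i}

/-- `V_d(k)`. -/
def Vset (p q d k : ℕ) : Set (Fin (d + 1) → ℕ) :=
  {m | m ∈ Uset p q d k ∧ 0 < m 0}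

/-- `W_d(k)`, the index set for the restricted power sum at `v = t`. -/
def Wset (p q d k : ℕ) : Set (Fin (d + 1) → ℕ) :=
  {m | NoCarry p m k ∧
      (∀ i : Fin (d + 1), 0 < (i : ℕ) → (i : ℕ) < d → 0 < m i ∧ (q - 1) ∣ m i) ∧
      (q - 1) ∣ m (Fin.last d)}

/-- the weight `d·m_0 + (d-1)·m_1 + ⋯ + 1·m_{d-1}`. -/
def wt {d : ℕ} (m : Fin (d + 1) → ℕ) : ℕ := ∑ i : Fin (d + 1), (d - (i : ℕ)) * m i

/-- `L_k = min_{0 ≤ i ≤ f-1} l(k·p^i)/(q-1)` where `l` is the base-`q` digit sum. -/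
noncomputable def Lval (q p f k : ℕ) : ℚ :=
  (Finset.Icc 0 (f - 1)).inf' ⟨0, by simp⟩
    (fun i => ((Nat.digits q (k * p ^ i)).sum : ℚ) / ((q : ℚ) - 1))

/-- the `v`-adic multiple zeta value at negative integers `s_1, …, s_r`. -/
noncomputable def zetaV (F : Type) [Field F] [Fintype F] (v : F[X]) {r : ℕ}
    (s : Fin r → ℤ) : F[X] :=
  ∑ᶠ d ∈ {d : Fin r → ℕ | StrictAnti d}, ∏ i, rPowerSum F v (d i) (-(s i)).toNat

/-- the multiple zeta value at negative integers `s_1, …, s_r`. -/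
noncomputable def zetaMZV (F : Type) [Field F] [Fintype F] {r : ℕ} (s : Fin r → ℤ) : F[X] :=
  ∑ᶠ d ∈ {d : Fin r → ℕ | StrictAnti d}, ∏ i, powerSum F (d i) (-(s i)).toNat

/-- the trivial-zero condition for a prime of degree `e`. -/
def TrivialZeroCond (q p f : ℕ) {r : ℕ} (s : Fin r → ℤ) (e : ℕ) : Prop :=
  (∃ i : Fin r, s i < 0 ∧
      Lval q p f (-(s i)).toNat + (e : ℚ) < ((r - 1 - (i : ℕ) : ℕ) : ℚ)) ∨
  (∃ i j : Fin r, j < i ∧ s i < 0 ∧ s j < 0 ∧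
      (r - 1 - (i : ℕ) : ℕ) < e ∧
      Lval q p f (-(s i)).toNat < ((r - 1 - (i : ℕ) : ℕ) : ℚ) ∧
      Lval q p f (-(s j)).toNat < (((i : ℕ) - (j : ℕ) : ℕ) : ℚ))

set_option linter.unusedSectionVars false

/-! ### Cheapest choices of coins with given class counts -/

/-- Coins of denominations `p ^ j`, `j < D`, with `dig j < p` coins of denomination `p ^ j`
available; the class of such a coin is `j` modulo `f`. The vector `ν` fixes a residue condition on
the numbers of coins chosen in each class: only the count vectors `CoinSys.cnt x` are of interest. -/
structure CoinSys (f : ℕ) where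
  p : ℕ
  two_le : 2 ≤ p
  dig : ℕ → ℕ
  dig_lt : ∀ j, dig j < p
  D : ℕ
  ν : ZMod f → ℤ
  ν_nonneg : ∀ c, 0 ≤ ν c


namespace CoinSys

variable {f : ℕ} [NeZero f] (S : CoinSys f)

/-- The number of available coins of class `c` and denomination below `p ^ J`. -/
def cum (c : ZMod f) (J : ℕ) : ℤ :=
  ∑ j ∈ Finset.range J, if (j : ZMod f) = c then (S.dig j : ℤ) else 0

/-- The count vectors that can be realised: `n c` coins of class `c` are available for every `c`. -/
def Adm (n : ZMod f → ℤ) : Prop := ∀ c, 0 ≤ n c ∧ n c ≤ S.cum c S.D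

/-- The number of coins of denomination `p ^ j` among the `n` smallest coins of class `c`
(meaningful for `0 ≤ n ≤ cum c D`). -/
def coin (n : ℤ) (c : ZMod f) (j : ℕ) : ℤ :=
  min n (S.cum c (j + 1)) - min n (S.cum c j)

/-- The total value of the cheapest choice of coins containing `n c` coins of each class `c`. -/
def val (n : ZMod f → ℤ) : ℤ :=
  ∑ c, ∑ j ∈ Finset.range S.D, (S.p : ℤ) ^ j * S.coin (n c) c j

/-- The part of `val n` coming from denominations below `p ^ J`. -/
def lo (J : ℕ) (n : ZMod f → ℤ) : ℤ :=
  ∑ c, ∑ j ∈ Finset.range J, (S.p : ℤ) ^ j * S.coin (n c) c j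

/-- The part of `val n` coming from denominations at least `p ^ J`. -/
def hi (J : ℕ) (n : ZMod f → ℤ) : ℤ :=
  ∑ c, ∑ j ∈ Finset.Ico J S.D, (S.p : ℤ) ^ j * S.coin (n c) c j

lemma cum_zero (c : ZMod f) : S.cum c 0 = 0 := by simp [cum]

lemma cum_succ (c : ZMod f) (J : ℕ) :
    S.cum c (J + 1) = S.cum c J + if (J : ZMod f) = c then (S.dig J : ℤ) else 0 := by
  simp [cum, Finset.sum_range_succ]

lemma cum_le_succ (c : ZMod f) (J : ℕ) : S.cum c J ≤ S.cum c (J + 1) := by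
  rw [cum_succ]; split_ifs <;> simp

lemma cum_mono (c : ZMod f) {J K : ℕ} (h : J ≤ K) : S.cum c J ≤ S.cum c K :=
  monotone_nat_of_le_succ (fun J => S.cum_le_succ c J) h

lemma cum_succ_of_ne {c : ZMod f} {J : ℕ} (h : (J : ZMod f) ≠ c) :
    S.cum c (J + 1) = S.cum c J := by
  rw [cum_succ, if_neg h, add_zero]

lemma cum_nonneg (c : ZMod f) (J : ℕ) : 0 ≤ S.cum c J := by
  have := S.cum_mono c (Nat.zero_le J); rwa [cum_zero] at this

/-- Only one of `f` consecutive positions belongs to the class `c`. -/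
lemma cum_window (c : ZMod f) (J : ℕ) : S.cum c (J + f) ≤ S.cum c J + (S.p - 1) := by
  unfold cum
  rw [Finset.sum_range_add, ← Finset.sum_filter (s := Finset.range f)]
  gcongr
  have h1 : ∀ i ∈ (Finset.range f).filter (fun i => ((J + i : ℕ) : ZMod f) = c),
      (S.dig (J + i) : ℤ) ≤ S.p - 1 := by
    intro i _; have := S.dig_lt (J + i); omega
  refine (Finset.sum_le_card_nsmul _ _ _ h1).trans ?_
  have h2 : ((Finset.range f).filter (fun i => ((J + i : ℕ) : ZMod f) = c)).card ≤ 1 := by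
    rw [Finset.card_le_one]
    intro a ha b hb
    simp only [Finset.mem_filter, Finset.mem_range] at ha hb
    have h := ha.2.trans hb.2.symm
    rw [ZMod.natCast_eq_natCast_iff] at h
    have := Nat.ModEq.add_left_cancel' J h
    exact Nat.ModEq.eq_of_lt_of_lt this ha.1 hb.1
  have h3 := S.two_le
  have h4 : (0:ℤ) ≤ S.p - 1 := by omega
  rw [nsmul_eq_mul]
  have : (((Finset.range f).filter (fun i => ((J + i : ℕ) : ZMod f) = c)).card : ℤ) ≤ 1 := by
    exact_mod_cast h2
  nlinarith

lemma coin_nonneg (n : ℤ) (c : ZMod f) (j : ℕ) : 0 ≤ S.coin n c j := by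
  have := S.cum_le_succ c j
  unfold coin; omega

lemma val_eq {J : ℕ} (hJ : J ≤ S.D) (n : ZMod f → ℤ) : S.val n = S.lo J n + S.hi J n := by
  unfold val lo hi
  rw [← Finset.sum_add_distrib]
  refine Finset.sum_congr rfl fun c _ => ?_
  rw [Finset.sum_range_add_sum_Ico _ hJ]

lemma lo_nonneg (J : ℕ) (n : ZMod f → ℤ) : 0 ≤ S.lo J n :=
  Finset.sum_nonneg fun c _ => Finset.sum_nonneg fun j _ =>
    mul_nonneg (by positivity) (S.coin_nonneg _ _ _)

lemma hi_nonneg (J : ℕ) (n : ZMod f → ℤ) : 0 ≤ S.hi J n :=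
  Finset.sum_nonneg fun c _ => Finset.sum_nonneg fun j _ =>
    mul_nonneg (by positivity) (S.coin_nonneg _ _ _)

lemma sum_coin_le (n : ZMod f → ℤ) (j : ℕ) : ∑ c, S.coin (n c) c j ≤ S.p - 1 := by
  have h : ∀ c, S.coin (n c) c j ≤ if (j : ZMod f) = c then (S.dig j : ℤ) else 0 := by
    intro c
    have := S.cum_succ c j
    have := S.cum_le_succ c j
    unfold coin; omega
  refine (Finset.sum_le_sum fun c _ => h c).trans ?_
  have := S.dig_lt j
  simp; omega

/-- Digits below position `J` make up less than `p ^ J`. -/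
lemma lo_lt (J : ℕ) (n : ZMod f → ℤ) : S.lo J n < (S.p : ℤ) ^ J := by
  unfold lo
  rw [Finset.sum_comm]
  simp_rw [← Finset.mul_sum]
  induction J with
  | zero => simp
  | succ J ih =>
    rw [Finset.sum_range_succ, pow_succ]
    have h := S.sum_coin_le n J
    have hp : (0:ℤ) ≤ (S.p : ℤ) ^ J := by positivity
    nlinarith [mul_le_mul_of_nonneg_left h hp]

/-- The number `max (n c) (cum c J)` records how many coins of class `c` and position at least
`J` are used; each additional one costs at least `p ^ J`. -/
lemma hi_le {J : ℕ} (hJ : J ≤ S.D) {n m : ZMod f → ℤ} (hn : S.Adm n) (hm : S.Adm m)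
    (h : ∀ c, max (n c) (S.cum c J) ≤ max (m c) (S.cum c J)) :
    S.hi J n + (S.p : ℤ) ^ J * ∑ c, (max (m c) (S.cum c J) - max (n c) (S.cum c J)) ≤ S.hi J m := by
  unfold hi
  rw [Finset.mul_sum, ← Finset.sum_add_distrib]
  refine Finset.sum_le_sum fun c _ => ?_
  have htel : ∀ k : ℤ, k ≤ S.cum c S.D →
      ∑ j ∈ Finset.Ico J S.D, S.coin k c j = max k (S.cum c J) - S.cum c J := by
    intro k hk
    unfold coin
    rw [Finset.sum_Ico_sub (fun j => min k (S.cum c j)) hJ]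
    omega
  have hd : max (m c) (S.cum c J) - max (n c) (S.cum c J)
      = ∑ j ∈ Finset.Ico J S.D, (S.coin (m c) c j - S.coin (n c) c j) := by
    rw [Finset.sum_sub_distrib, htel _ (hn c).2, htel _ (hm c).2]; ring
  rw [hd, Finset.mul_sum, ← Finset.sum_add_distrib]
  refine Finset.sum_le_sum fun j hj => ?_
  rw [Finset.mem_Ico] at hj
  have h1 := S.cum_mono c hj.1
  have h2 := S.cum_le_succ c j
  have h3 : 0 ≤ S.coin (m c) c j - S.coin (n c) c j := by
    have := h c
    unfold coin; omega
  have h4 : (S.p : ℤ) ^ J ≤ (S.p : ℤ) ^ j := by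
    apply pow_le_pow_right₀ _ hj.1
    have := S.two_le; omega
  nlinarith

lemma hi_congr {J : ℕ} (hJ : J ≤ S.D) {n m : ZMod f → ℤ} (hn : S.Adm n) (hm : S.Adm m)
    (h : ∀ c, max (n c) (S.cum c J) = max (m c) (S.cum c J)) : S.hi J n = S.hi J m := by
  apply le_antisymm
  · simpa [h] using S.hi_le hJ hn hm (fun c => (h c).le)
  · simpa [h] using S.hi_le hJ hm hn (fun c => (h c).ge)

lemma hi_lt {J : ℕ} (hJ : J ≤ S.D) {n m : ZMod f → ℤ} (hn : S.Adm n) (hm : S.Adm m)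
    (h : ∀ c, max (n c) (S.cum c J) ≤ max (m c) (S.cum c J)) {b : ZMod f}
    (hb : max (n b) (S.cum b J) < max (m b) (S.cum b J)) :
    S.hi J n + (S.p : ℤ) ^ J ≤ S.hi J m := by
  have h1 := S.hi_le hJ hn hm h
  have h2 : (1:ℤ) ≤ ∑ c, (max (m c) (S.cum c J) - max (n c) (S.cum c J)) := by
    have := Finset.single_le_sum (f := fun c => max (m c) (S.cum c J) - max (n c) (S.cum c J))
      (fun c _ => by have := h c; omega) (Finset.mem_univ b)
    omega
  have hp : (0:ℤ) ≤ (S.p : ℤ) ^ J := by positivity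
  nlinarith

/-- The top position `J` at which the cheapest choices for two count vectors differ. Positions
at or above `K` agree exactly when `max (n c) (cum c K) = max (m c) (cum c K)` for all `c`. -/
lemma exists_top {n m : ZMod f → ℤ} (hn : S.Adm n) (hm : S.Adm m) (hne : n ≠ m) :
    ∃ J < S.D, (∀ c, max (n c) (S.cum c (J + 1)) = max (m c) (S.cum c (J + 1))) ∧
      (∀ c, c ≠ (J : ZMod f) → max (n c) (S.cum c J) = max (m c) (S.cum c J)) ∧
      max (n J) (S.cum J J) ≠ max (m J) (S.cum J J) := by
  classical
  have hex : ∃ K, ∀ c, max (n c) (S.cum c K) = max (m c) (S.cum c K) :=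
    ⟨S.D, fun c => by rw [max_eq_right (hn c).2, max_eq_right (hm c).2]⟩
  have hKD : Nat.find hex ≤ S.D := Nat.find_min' hex
    (fun c => by rw [max_eq_right (hn c).2, max_eq_right (hm c).2])
  have hspec := Nat.find_spec hex
  rcases hK : Nat.find hex with _ | J
  · exfalso
    apply hne
    funext c
    have h := hspec c
    rw [hK, cum_zero] at h
    have := (hn c).1
    have := (hm c).1
    omega
  · rw [hK] at hspec hKD
    have hnot := Nat.find_min hex (m := J) (by omega)
    push Not at hnot
    obtain ⟨c, hc⟩ := hnot
    have hother : ∀ c, c ≠ (J : ZMod f) → max (n c) (S.cum c J) = max (m c) (S.cum c J) := by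
      intro c hc
      have := hspec c
      rwa [S.cum_succ_of_ne (Ne.symm hc)] at this
    have hcJ : c = (J : ZMod f) := by
      by_contra h
      exact hc (hother c h)
    subst hcJ
    exact ⟨J, by omega, hspec, hother, hc⟩

lemma val_lt_of_top {n m : ZMod f → ℤ} (hn : S.Adm n) (hm : S.Adm m) {J : ℕ} (hJ : J < S.D)
    (h : ∀ c, c ≠ (J : ZMod f) → max (n c) (S.cum c J) = max (m c) (S.cum c J))
    (hb : max (n J) (S.cum J J) < max (m J) (S.cum J J)) : S.val n < S.val m := by
  have h1 := S.hi_lt hJ.le hn hm (fun c => by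
    by_cases hc : c = (J : ZMod f)
    · subst hc; exact hb.le
    · exact (h c hc).le) hb
  rw [S.val_eq hJ.le n, S.val_eq hJ.le m]
  have := S.lo_lt J n
  have := S.lo_nonneg J m
  omega

lemma val_inj {n m : ZMod f → ℤ} (hn : S.Adm n) (hm : S.Adm m) (h : S.val n = S.val m) :
    n = m := by
  by_contra hne
  obtain ⟨J, hJ, -, h2, h3⟩ := S.exists_top hn hm hne
  rcases lt_or_gt_of_ne h3 with h4 | h4
  · have := S.val_lt_of_top hn hm hJ h2 h4; omega
  · have := S.val_lt_of_top hm hn hJ (fun c hc => (h2 c hc).symm) h4; omega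

/-- If `m` is cheaper than `n`, then at the top position `J` where the cheapest choices differ
`m` has lost a coin that `n` uses. -/
lemma exists_lost {n m : ZMod f → ℤ} (hn : S.Adm n) (hm : S.Adm m) (h : S.val m < S.val n) :
    ∃ J < S.D, (∀ c, max (n c) (S.cum c (J + 1)) = max (m c) (S.cum c (J + 1))) ∧
      (∀ c, m c ≤ max (n c) (S.cum c J)) ∧ m J < n J ∧ S.cum J J < n J := by
  obtain ⟨J, hJ, h1, h2, h3⟩ := S.exists_top hn hm (by rintro rfl; exact lt_irrefl _ h)
  rcases lt_or_gt_of_ne h3 with h4 | h4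
  · have := S.val_lt_of_top hn hm hJ h2 h4; omega
  · refine ⟨J, hJ, h1, fun c => ?_, by omega, by omega⟩
    by_cases hc : c = (J : ZMod f)
    · subst hc; omega
    · have := h2 c hc; omega

/-- Summation by parts. -/
lemma abel (P : ℤ) (h : ℕ → ℤ) (D : ℕ) :
    ∑ j ∈ Finset.range D, P ^ j * (h (j + 1) - h j)
      = P ^ D * h D - h 0 - ∑ j ∈ Finset.range D, (P ^ (j + 1) - P ^ j) * h (j + 1) := by
  induction D with
  | zero => simp
  | succ D ih => rw [Finset.sum_range_succ, Finset.sum_range_succ, ih]; ring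

lemma val_abel {n : ZMod f → ℤ} (hn : S.Adm n) :
    S.val n = ∑ c, ((S.p : ℤ) ^ S.D * n c - ∑ j ∈ Finset.range S.D,
      ((S.p : ℤ) ^ (j + 1) - (S.p : ℤ) ^ j) * min (n c) (S.cum c (j + 1))) := by
  refine Finset.sum_congr rfl fun c _ => ?_
  unfold coin
  rw [abel _ (fun j => min (n c) (S.cum c j))]
  simp only [cum_zero]
  rw [min_eq_left (hn c).2, min_eq_right (hn c).1, sub_zero]

lemma pow_step_nonneg (j : ℕ) : (0:ℤ) ≤ (S.p : ℤ) ^ (j + 1) - (S.p : ℤ) ^ j := by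
  have h := S.two_le
  have : (S.p : ℤ) ^ j ≤ (S.p : ℤ) ^ (j + 1) := pow_le_pow_right₀ (by omega) (by omega)
  omega

/-- `val` is a sum of convex functions of the individual counts, so spreading two count
vectors apart with fixed sum does not decrease the total value. -/
lemma val_convex {n₁ n₂ n₃ n₄ : ZMod f → ℤ} (h₁ : S.Adm n₁) (h₂ : S.Adm n₂) (h₃ : S.Adm n₃)
    (h₄ : S.Adm n₄) (hs : ∀ c, n₁ c + n₂ c = n₃ c + n₄ c)
    (hlo : ∀ c, min (n₃ c) (n₄ c) ≤ n₁ c) (hhi : ∀ c, n₁ c ≤ max (n₃ c) (n₄ c)) :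
    S.val n₁ + S.val n₂ ≤ S.val n₃ + S.val n₄ := by
  rw [S.val_abel h₁, S.val_abel h₂, S.val_abel h₃, S.val_abel h₄, ← Finset.sum_add_distrib,
    ← Finset.sum_add_distrib]
  refine Finset.sum_le_sum fun c _ => ?_
  have key : ∑ j ∈ Finset.range S.D,
      ((S.p : ℤ) ^ (j + 1) - (S.p : ℤ) ^ j) * min (n₃ c) (S.cum c (j + 1)) +
      ∑ j ∈ Finset.range S.D,
      ((S.p : ℤ) ^ (j + 1) - (S.p : ℤ) ^ j) * min (n₄ c) (S.cum c (j + 1)) ≤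
      ∑ j ∈ Finset.range S.D,
      ((S.p : ℤ) ^ (j + 1) - (S.p : ℤ) ^ j) * min (n₁ c) (S.cum c (j + 1)) +
      ∑ j ∈ Finset.range S.D,
      ((S.p : ℤ) ^ (j + 1) - (S.p : ℤ) ^ j) * min (n₂ c) (S.cum c (j + 1)) := by
    rw [← Finset.sum_add_distrib, ← Finset.sum_add_distrib]
    refine Finset.sum_le_sum fun j _ => ?_
    rw [← mul_add, ← mul_add]
    refine mul_le_mul_of_nonneg_left ?_ (S.pow_step_nonneg j)
    have := hs c
    have := hlo c
    have := hhi c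
    omega
  have h5 : (S.p : ℤ) ^ S.D * n₁ c + (S.p : ℤ) ^ S.D * n₂ c
      = (S.p : ℤ) ^ S.D * n₃ c + (S.p : ℤ) ^ S.D * n₄ c := by
    rw [← mul_add, hs c, mul_add]
  linarith

end CoinSys

/-! ### Feasible vectors, submodularity and exchange -/

namespace CoinSys

variable {f : ℕ} [NeZero f] (S : CoinSys f)

lemma p_pos : (2:ℤ) ≤ S.p := by exact_mod_cast S.two_le

lemma hi_lt_of_lost {J : ℕ} {n m : ZMod f → ℤ} (hn : S.Adm n) (hm : S.Adm m)
    (h : ∀ c, n c ≤ max (m c) (S.cum c J)) {b : ZMod f} (hb : n b < m b)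
    (hJb : S.cum b J < m b) : J < S.D ∧ S.hi J n + (S.p : ℤ) ^ J ≤ S.hi J m := by
  have hJ : J < S.D := by
    by_contra hcon
    have := S.cum_mono b (not_lt.mp hcon)
    have := (hm b).2
    omega
  exact ⟨hJ, S.hi_lt hJ.le hn hm (fun c => by have := h c; omega) (b := b) (by omega)⟩

lemma val_lt_of_lost {J : ℕ} {n m m' : ZMod f → ℤ} (hn : S.Adm n) (hm : S.Adm m)
    (hm' : S.Adm m') (hag : ∀ c, max (m c) (S.cum c J) = max (m' c) (S.cum c J))
    (h : ∀ c, n c ≤ max (m c) (S.cum c J)) {b : ZMod f} (hb : n b < m b)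
    (hJb : S.cum b J < m b) : S.val n < S.val m' := by
  obtain ⟨hJ, h1⟩ := S.hi_lt_of_lost hn hm h hb hJb
  rw [S.hi_congr hJ.le hm hm' hag] at h1
  rw [S.val_eq hJ.le n, S.val_eq hJ.le m']
  have := S.lo_lt J n
  have := S.lo_nonneg J m'
  omega

lemma val_lt_add_of_agree {J : ℕ} (hJ : J ≤ S.D) {n m : ZMod f → ℤ} (hn : S.Adm n)
    (hm : S.Adm m) (hag : ∀ c, max (n c) (S.cum c J) = max (m c) (S.cum c J)) :
    S.val n < S.val m + (S.p : ℤ) ^ J := by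
  rw [S.val_eq hJ n, S.val_eq hJ m, S.hi_congr hJ hn hm hag]
  have := S.lo_lt J n
  have := S.lo_nonneg J m
  omega

lemma coin_mono {k l : ℤ} (h : k ≤ l) (c : ZMod f) (j : ℕ) : S.coin k c j ≤ S.coin l c j := by
  have := S.cum_le_succ c j
  unfold coin; omega

lemma val_add_le {J : ℕ} {n m : ZMod f → ℤ} (hn : S.Adm n) (hm : S.Adm m)
    (h : ∀ c, n c ≤ m c) {b : ZMod f} (hb : n b < m b)
    (hJb : S.cum b J < m b) : S.val n + (S.p : ℤ) ^ J ≤ S.val m := by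
  obtain ⟨hJ, h1⟩ := S.hi_lt_of_lost hn hm (J := J)
    (fun c => (h c).trans (le_max_left _ _)) hb hJb
  rw [S.val_eq hJ.le n, S.val_eq hJ.le m]
  have : S.lo J n ≤ S.lo J m := Finset.sum_le_sum fun c _ => Finset.sum_le_sum fun j _ =>
    mul_le_mul_of_nonneg_left (S.coin_mono (h c) c j) (by positivity)
  omega

/-- The last coin of class `z`, if it lies below position `J`, costs at most
`p ^ (J - 1)`; the inequality is multiplied by `p` to avoid the subtraction. -/
lemma val_le_update {J : ℕ} {n : ZMod f → ℤ} (hn : S.Adm n) {z : ZMod f} {k : ℤ}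
    (hk : n z = k + 1) (hJ : n z ≤ S.cum z J) :
    (S.p : ℤ) * S.val n ≤ S.p * S.val (Function.update n z k) + (S.p : ℤ) ^ J := by
  have hsplit : ∀ m : ZMod f → ℤ, S.val m =
      (∑ j ∈ Finset.range S.D, (S.p : ℤ) ^ j * S.coin (m z) z j) +
      ∑ c ∈ Finset.univ.erase z, ∑ j ∈ Finset.range S.D, (S.p : ℤ) ^ j * S.coin (m c) c j :=
    fun m => (Finset.add_sum_erase _ _ (Finset.mem_univ z)).symm
  rw [hsplit n, hsplit (Function.update n z k)]
  have hrest : ∑ c ∈ Finset.univ.erase z, ∑ j ∈ Finset.range S.D,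
        (S.p : ℤ) ^ j * S.coin (Function.update n z k c) c j
      = ∑ c ∈ Finset.univ.erase z, ∑ j ∈ Finset.range S.D,
        (S.p : ℤ) ^ j * S.coin (n c) c j := by
    refine Finset.sum_congr rfl fun c hc => ?_
    rw [Function.update_of_ne (Finset.ne_of_mem_erase hc)]
  rw [hrest, Function.update_self]
  have htel : ∑ j ∈ Finset.range S.D, (S.coin (n z) z j - S.coin k z j) ≤ 1 := by
    rw [Finset.sum_sub_distrib]
    unfold coin
    rw [Finset.sum_range_sub (fun j => min (n z) (S.cum z j)),
      Finset.sum_range_sub (fun j => min k (S.cum z j))]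
    simp only [cum_zero]
    omega
  have hle : ∑ j ∈ Finset.range S.D, (S.p : ℤ) * ((S.p : ℤ) ^ j * (S.coin (n z) z j - S.coin k z j))
      ≤ ∑ j ∈ Finset.range S.D, (S.p : ℤ) ^ J * (S.coin (n z) z j - S.coin k z j) := by
    refine Finset.sum_le_sum fun j _ => ?_
    have h0 : 0 ≤ S.coin (n z) z j - S.coin k z j := by
      have := S.coin_mono (show k ≤ n z by omega) z j
      omega
    rcases lt_or_ge j J with hjJ | hjJ
    · have : (S.p : ℤ) ^ (j + 1) ≤ (S.p : ℤ) ^ J :=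
        pow_le_pow_right₀ (by have := S.p_pos; omega) hjJ
      rw [pow_succ] at this
      nlinarith
    · have : S.coin (n z) z j - S.coin k z j = 0 := by
        have := S.cum_mono z hjJ
        have := S.cum_le_succ z j
        unfold coin; omega
      rw [this]; simp
  rw [← Finset.mul_sum, ← Finset.mul_sum] at hle
  have hd : ∑ j ∈ Finset.range S.D, (S.p : ℤ) ^ j * (S.coin (n z) z j - S.coin k z j)
      = ∑ j ∈ Finset.range S.D, (S.p : ℤ) ^ j * S.coin (n z) z j
        - ∑ j ∈ Finset.range S.D, (S.p : ℤ) ^ j * S.coin k z j := by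
    simp only [mul_sub, Finset.sum_sub_distrib]
  rw [hd] at hle
  have hp : (0:ℤ) ≤ (S.p : ℤ) ^ J := by positivity
  nlinarith

/-- The count vector belonging to the integer vector `x`. These are the count vectors in a fixed
residue class modulo `p ^ f - 1`, with `x` recording quotients by `p ^ f - 1`. -/
def cnt (x : ZMod f → ℤ) (c : ZMod f) : ℤ := S.p * x (c + 1) - x c + S.ν c

/-- The integer vectors whose count vector can be realised. -/
def Feas (x : ZMod f → ℤ) : Prop := S.Adm (S.cnt x)

/-- The cheapest value as a function of the integer vector. -/
def w (x : ZMod f → ℤ) : ℤ := S.val (S.cnt x)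

/-- Going once around the cycle `ZMod f`, a positive maximum would be multiplied by `p ≥ 2`. -/
lemma rot_nonpos {e : ZMod f → ℤ} (h : ∀ c, S.p * e (c + 1) ≤ e c) (c : ZMod f) : e c ≤ 0 := by
  obtain ⟨m, hm⟩ := Finite.exists_max e
  have h1 := h (m - 1)
  rw [sub_add_cancel] at h1
  have h2 := hm (m - 1)
  have h3 := hm c
  have := S.p_pos
  nlinarith

lemma cnt_inj {x y : ZMod f → ℤ} (h : S.cnt x = S.cnt y) : x = y := by
  have h' : ∀ c, S.p * x (c + 1) - x c + S.ν c = S.p * y (c + 1) - y c + S.ν c :=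
    fun c => congrFun h c
  funext c
  have h1 := S.rot_nonpos (e := fun c => x c - y c) (fun c => by have := h' c; linarith) c
  have h2 := S.rot_nonpos (e := fun c => y c - x c) (fun c => by have := h' c; linarith) c
  omega

lemma w_inj {x y : ZMod f → ℤ} (hx : S.Feas x) (hy : S.Feas y) (h : S.w x = S.w y) : x = y :=
  S.cnt_inj (S.val_inj hx hy h)

/-- The system `m ≤ τ`, `p τ(c + 1) - B c ≤ τ c` has a least solution if it has one
(for `m ≥ 0`), and in every coordinate the least solution satisfies one of the two constraints with equality. -/
lemma exists_least (m B τ₀ : ZMod f → ℤ) (hm : ∀ c, 0 ≤ m c) (h₁ : ∀ c, m c ≤ τ₀ c)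
    (h₂ : ∀ c, S.p * τ₀ (c + 1) - B c ≤ τ₀ c) :
    ∃ ζ : ZMod f → ℤ, (∀ c, m c ≤ ζ c) ∧ (∀ c, S.p * ζ (c + 1) - B c ≤ ζ c) ∧
      (∀ c, ζ c = m c ∨ ζ c = S.p * ζ (c + 1) - B c) ∧
      ∀ τ : ZMod f → ℤ, (∀ c, m c ≤ τ c) → (∀ c, S.p * τ (c + 1) - B c ≤ τ c) →
        ∀ c, ζ c ≤ τ c := by
  set Sol : Set (ZMod f → ℤ) := {τ | (∀ c, m c ≤ τ c) ∧ ∀ c, S.p * τ (c + 1) - B c ≤ τ c}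
  have hmin : ∀ c, ∃ t ∈ Sol, ∀ τ ∈ Sol, t c ≤ τ c := by
    intro c
    obtain ⟨t, ht, hmin⟩ := WellFounded.has_min
      (measure (fun τ : ZMod f → ℤ => (τ c).toNat)).wf Sol ⟨τ₀, h₁, h₂⟩
    refine ⟨t, ht, fun τ hτ => ?_⟩
    have h := hmin τ hτ
    have h3 := hτ.1 c
    have h4 := hm c
    simp only [InvImage, WellFoundedRelation.rel] at h
    simp only [not_lt] at h
    omega
  choose t ht hmin using hmin
  have hp := S.p_pos
  have hsol : (fun c => t c c) ∈ Sol := by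
    refine ⟨fun c => (ht c).1 c, fun c => ?_⟩
    have h1 := hmin (c + 1) (t c) (ht c)
    have h2 := (ht c).2 c
    simp only
    nlinarith
  refine ⟨fun c => t c c, hsol.1, hsol.2, fun c => ?_, fun τ h1 h2 c => hmin c τ ⟨h1, h2⟩⟩
  have hsol' : (fun c => max (m c) (S.p * t (c + 1) (c + 1) - B c)) ∈ Sol := by
    refine ⟨fun c => le_max_left _ _, fun c => ?_⟩
    have h1 : max (m (c + 1)) (S.p * t (c + 1 + 1) (c + 1 + 1) - B (c + 1)) ≤ t (c + 1) (c + 1) :=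
      max_le (hsol.1 _) (hsol.2 _)
    refine le_trans ?_ (le_max_right _ _)
    simp only
    nlinarith
  have h1 := hmin c _ hsol'
  have h2 := hsol.1 c
  have h3 := hsol.2 c
  simp only at h1 h2 h3 ⊢
  omega

lemma cnt_add (x ζ : ZMod f → ℤ) (c : ZMod f) :
    S.cnt (fun c => x c + ζ c) c = S.cnt x c + (S.p * ζ (c + 1) - ζ c) := by
  unfold cnt; ring

lemma cnt_sub (x ζ : ZMod f → ℤ) (c : ZMod f) :
    S.cnt (fun c => x c - ζ c) c = S.cnt x c - (S.p * ζ (c + 1) - ζ c) := by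
  unfold cnt; ring

/-- Feasible vectors form a lattice on which `w` is submodular. -/
lemma submod {x y : ZMod f → ℤ} (hx : S.Feas x) (hy : S.Feas y) :
    S.Feas (x ⊓ y) ∧ S.Feas (x ⊔ y) ∧ S.w (x ⊓ y) + S.w (x ⊔ y) ≤ S.w x + S.w y := by
  have hp := S.p_pos
  have key : ∀ c, S.cnt (x ⊓ y) c + S.cnt (x ⊔ y) c = S.cnt x c + S.cnt y c ∧
      min (S.cnt x c) (S.cnt y c) ≤ S.cnt (x ⊓ y) c ∧
      S.cnt (x ⊓ y) c ≤ max (S.cnt x c) (S.cnt y c) := by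
    intro c
    simp only [cnt, Pi.inf_apply, Pi.sup_apply]
    have hpm : ∀ u v : ℤ, u ≤ v → S.p * u ≤ S.p * v := fun u v h => by nlinarith
    rcases le_total (x (c + 1)) (y (c + 1)) with h1 | h1
    · have := hpm _ _ h1
      rw [inf_eq_left.mpr h1, sup_eq_right.mpr h1]
      omega
    · have := hpm _ _ h1
      rw [inf_eq_right.mpr h1, sup_eq_left.mpr h1]
      omega
  have hF : S.Feas (x ⊓ y) ∧ S.Feas (x ⊔ y) := by
    constructor <;> intro c <;> have := key c <;> have := hx c <;> have := hy c <;> omega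
  exact ⟨hF.1, hF.2, S.val_convex hF.1 hF.2 hx hy (fun c => (key c).1) (fun c => (key c).2.1)
    (fun c => (key c).2.2)⟩

/-- Below a feasible vector `a ≥ l + 1` there is a feasible vector lying strictly below in all
coordinates and still at least `l`. -/
lemma exists_below {a : ZMod f → ℤ} (ha : S.Feas a) {l : ℤ} (hl : 0 ≤ l)
    (hla : ∀ c, l + 1 ≤ a c) : ∃ y, S.Feas y ∧ (∀ c, l ≤ y c) ∧ ∀ c, y c ≤ a c - 1 := by
  have hp := S.p_pos
  obtain ⟨ζ, h1, h2, h3, h4⟩ := S.exists_least (fun _ => 1) (S.cnt a) (fun c => a c - l)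
    (fun _ => by norm_num) (fun c => by have := hla c; omega) (fun c => by
      have := S.ν_nonneg c
      simp only [cnt]
      nlinarith)
  have h5 := h4 (fun c => a c - l) (fun c => by have := hla c; omega) (fun c => by
      have := S.ν_nonneg c
      simp only [cnt]
      nlinarith)
  refine ⟨fun c => a c - ζ c, fun c => ?_, fun c => ?_, fun c => ?_⟩
  · rw [cnt_sub]
    have := ha c
    have h6 := h2 c
    have h7 := h1 (c + 1)
    rcases h3 c with h | h
    · rw [h] at h6 ⊢
      constructor
      · linarith
      · nlinarith
    · rw [h]; constructor <;> linarith
  · have := h5 c; simp only at this ⊢; omega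
  · have := h1 c; simp only at this ⊢; omega

/-- Between feasible `a ≤ x` one can give up exactly one coin of a class `b` in which `x`
has no more coins than `a`, without exceeding the larger of the two counts in any other class. -/
lemma exists_exchange {a x : ZMod f → ℤ} (ha : S.Feas a) (hx : S.Feas x) (hax : ∀ c, a c ≤ x c)
    {b : ZMod f} (hb : a b < x b) (hcb : S.cnt x b ≤ S.cnt a b) (hpos : 0 < S.cnt a b) :
    ∃ v, S.Feas v ∧ (∀ c, a c ≤ v c) ∧ (∀ c, v c ≤ x c) ∧ S.cnt v b = S.cnt a b - 1 ∧
      ∀ c, S.cnt v c ≤ max (S.cnt a c) (S.cnt x c) := by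
  have hp := S.p_pos
  set B : ZMod f → ℤ := fun c => max (S.cnt a c) (S.cnt x c) - S.cnt a c with hB
  have hB0 : ∀ c, 0 ≤ B c := fun c => by simp only [hB]; omega
  have hBb : B b = 0 := by simp only [hB]; omega
  set m : ZMod f → ℤ := fun c => if c = b then 1 else 0 with hm
  have hm0 : ∀ c, 0 ≤ m c := fun c => by simp only [hm]; split_ifs <;> norm_num
  have hτ1 : ∀ c, m c ≤ x c - a c := fun c => by
    simp only [hm]; split_ifs with h
    · subst h; omega
    · have := hax c; omega
  have hτ2 : ∀ c, S.p * (x (c + 1) - a (c + 1)) - B c ≤ x c - a c := fun c => by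
    have h1 : S.cnt x c - S.cnt a c ≤ B c := by simp only [hB]; omega
    simp only [cnt] at h1
    linarith
  obtain ⟨ζ, h1, h2, h3, h4⟩ := S.exists_least m B (fun c => x c - a c) hm0 hτ1 hτ2
  have h5 := h4 _ hτ1 hτ2
  have hζ0 : ∀ c, 0 ≤ ζ c := fun c => (hm0 c).trans (h1 c)
  have hζb : 1 ≤ ζ b := by have := h1 b; simpa [hm] using this
  have hz : ζ (b + 1) = 0 := by
    by_contra hne
    have hpos1 : 1 ≤ ζ (b + 1) := by have := hζ0 (b + 1); omega
    have hb2 : 2 ≤ ζ b := by have := h2 b; nlinarith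
    have htight : ∀ c, 1 ≤ ζ c → ζ c = S.p * ζ (c + 1) - B c := by
      intro c hc
      rcases h3 c with h | h
      · exfalso
        simp only [hm] at h
        split_ifs at h with hcb
        · subst hcb; omega
        · omega
      · exact h
    have hnext : ∀ c, 1 ≤ ζ c → 1 ≤ ζ (c + 1) := by
      intro c hc
      have h6 := htight c hc
      have h7 := hB0 c
      have h8 := hζ0 (c + 1)
      by_contra h9
      have : ζ (c + 1) = 0 := by omega
      rw [this] at h6
      omega
    have hall' : ∀ i : ℕ, 1 ≤ ζ (b + i) := by
      intro i
      induction i with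
      | zero => simpa using hζb
      | succ i ih => have := hnext _ ih; push_cast; rwa [← add_assoc]
    have hall : ∀ c, 1 ≤ ζ c := by
      intro c
      have := hall' (c - b).val
      rwa [ZMod.natCast_zmod_val, add_sub_cancel] at this
    have := h4 (fun c => ζ c - 1) (fun c => by
      simp only [hm]; split_ifs with h
      · subst h; omega
      · have := hall c; omega) (fun c => by
      have := htight c (hall c)
      linarith) b
    omega
  have hζb' : ζ b = 1 := by
    rcases h3 b with h | h
    · simpa [hm] using h
    · rw [hz, hBb] at h; omega
  have hcnt : ∀ c, c ≠ b → 0 ≤ S.p * ζ (c + 1) - ζ c ∧ S.p * ζ (c + 1) - ζ c ≤ B c := by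
    intro c hc
    have h6 := h2 c
    have h7 := hζ0 (c + 1)
    refine ⟨?_, by linarith⟩
    rcases h3 c with h | h
    · simp only [hm, if_neg hc] at h
      rw [h]; nlinarith
    · have := hB0 c; linarith
  have hvb : S.cnt (fun c => a c + ζ c) b = S.cnt a b - 1 := by
    rw [cnt_add, hz, hζb']; ring
  have hvle : ∀ c, S.cnt (fun c => a c + ζ c) c ≤ max (S.cnt a c) (S.cnt x c) := by
    intro c
    by_cases hc : c = b
    · subst hc; omega
    · rw [cnt_add]
      have := (hcnt c hc).2
      simp only [hB] at this
      linarith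
  refine ⟨fun c => a c + ζ c, fun c => ⟨?_, ?_⟩, fun c => ?_, fun c => ?_, hvb, hvle⟩
  · by_cases hc : c = b
    · subst hc; omega
    · rw [cnt_add]
      have := (hcnt c hc).1
      have := (ha c).1
      linarith
  · have := hvle c
    have := (ha c).2
    have := (hx c).2
    omega
  · have := hζ0 c; simp only; omega
  · have := h5 c; simp only at this ⊢; omega

end CoinSys

/-! ### Optimality of greedy chains -/

namespace CoinSys

variable {f : ℕ} [NeZero f] (S : CoinSys f)

/-- `x` is a cheapest feasible vector in the box `i ≤ x ≤ u`. -/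
def IsMin (i : ℤ) (u x : ZMod f → ℤ) : Prop :=
  S.Feas x ∧ (∀ c, i ≤ x c) ∧ (∀ c, x c ≤ u c) ∧
    ∀ v, S.Feas v → (∀ c, i ≤ v c) → (∀ c, v c ≤ u c) → S.w x ≤ S.w v

/-- The greedy chain of length `l` below `u`, built from the top: `x (l - 1)` is cheapest in the
box `[l - 1, u]`, and each `x i` is cheapest in the box `[i, x (i + 1) - 1]`. -/
def Greedy : ℕ → (ZMod f → ℤ) → (ℕ → ZMod f → ℤ) → Prop
  | 0, _, _ => True
  | l + 1, u, x => S.IsMin l u (x l) ∧ Greedy l (fun c => x l c - 1) x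

/-- The chains competing with the greedy one: feasible vectors `i ≤ x i`, with
`x (l - 1) ≤ u` and `x i ≤ x (i + 1) - 1`. -/
def Fam : ℕ → (ZMod f → ℤ) → (ℕ → ZMod f → ℤ) → Prop
  | 0, _, _ => True
  | l + 1, u, x => S.Feas (x l) ∧ (∀ c, (l : ℤ) ≤ x l c) ∧ (∀ c, x l c ≤ u c) ∧
      Fam l (fun c => x l c - 1) x

lemma exists_isMin {i : ℤ} {u v : ZMod f → ℤ} (hv : S.Feas v) (h1 : ∀ c, i ≤ v c)
    (h2 : ∀ c, v c ≤ u c) : ∃ x, S.IsMin i u x := by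
  classical
  have hfin : {x | S.Feas x ∧ (∀ c, i ≤ x c) ∧ ∀ c, x c ≤ u c}.Finite :=
    (Set.finite_Icc (fun _ : ZMod f => i) u).subset fun x hx => ⟨hx.2.1, hx.2.2⟩
  obtain ⟨x, hx, hmin⟩ := Set.exists_min_image _ S.w hfin ⟨v, hv, h1, h2⟩
  exact ⟨x, hx.1, hx.2.1, hx.2.2, fun y hy hy1 hy2 => hmin y ⟨hy, hy1, hy2⟩⟩

lemma isMin_unique {i : ℤ} {u x y : ZMod f → ℤ} (hx : S.IsMin i u x) (hy : S.IsMin i u y) :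
    x = y :=
  S.w_inj hx.1 hy.1 (le_antisymm (hx.2.2.2 y hy.1 hy.2.1 hy.2.2.1)
    (hy.2.2.2 x hx.1 hx.2.1 hx.2.2.1))

/-- By submodularity, the cheapest vector moves up when the upper bound is relaxed. -/
lemma isMin_mono {i : ℤ} {u u' y y' : ZMod f → ℤ} (hy : S.IsMin i u y) (hy' : S.IsMin i u' y')
    (hu : ∀ c, u c ≤ u' c) : (∀ c, y c ≤ y' c) ∧ S.w y' ≤ S.w y := by
  obtain ⟨h1, h2, h3⟩ := S.submod hy.1 hy'.1
  have h4 : S.w y ≤ S.w (y ⊓ y') := hy.2.2.2 _ h1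
    (fun c => le_min (hy.2.1 c) (hy'.2.1 c)) (fun c => (min_le_left _ _).trans (hy.2.2.1 c))
  have h5 : S.w y' ≤ S.w (y ⊔ y') := hy'.2.2.2 _ h2
    (fun c => (hy.2.1 c).trans (le_max_left _ _))
    (fun c => max_le ((hy.2.2.1 c).trans (hu c)) (hy'.2.2.1 c))
  have h6 : y ⊓ y' = y := S.w_inj h1 hy.1 (by omega)
  refine ⟨fun c => ?_, hy'.2.2.2 _ hy.1 hy.2.1 fun c => (hy.2.2.1 c).trans (hu c)⟩
  exact inf_eq_left.mp h6 c

lemma greedy_congr {l : ℕ} {u : ZMod f → ℤ} {x y : ℕ → ZMod f → ℤ} (h : ∀ i < l, x i = y i)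
    (hx : S.Greedy l u x) : S.Greedy l u y := by
  induction l generalizing u with
  | zero => trivial
  | succ l ih =>
    have := h l (Nat.lt_succ_self l)
    refine ⟨this ▸ hx.1, ?_⟩
    rw [← this]
    exact ih (fun i hi => h i (by omega)) hx.2

lemma greedy_exists {l : ℕ} {u : ZMod f → ℤ}
    (h : 0 < l → ∃ v, S.Feas v ∧ (∀ c, (l : ℤ) - 1 ≤ v c) ∧ ∀ c, v c ≤ u c) :
    ∃ x, S.Greedy l u x := by
  classical
  induction l generalizing u with
  | zero => exact ⟨fun _ _ => 0, trivial⟩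
  | succ l ih =>
    obtain ⟨v, hv, h1, h2⟩ := h (Nat.succ_pos l)
    obtain ⟨a, ha⟩ := S.exists_isMin (i := l) hv (fun c => by have := h1 c; push_cast at this; omega) h2
    obtain ⟨x, hx⟩ := ih (u := fun c => a c - 1) (fun hl => by
      exact S.exists_below ha.1 (l := (l : ℤ) - 1) (by omega)
        (fun c => by have := ha.2.1 c; omega))
    refine ⟨Function.update x l a, ?_, ?_⟩
    · rwa [Function.update_self]
    · rw [Function.update_self]
      exact S.greedy_congr (fun i hi => (Function.update_of_ne (by omega) _ _).symm) hx

lemma greedy_unique {l : ℕ} {u : ZMod f → ℤ} {x y : ℕ → ZMod f → ℤ} (hx : S.Greedy l u x)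
    (hy : S.Greedy l u y) : ∀ i < l, x i = y i := by
  induction l generalizing u with
  | zero => intro i hi; omega
  | succ l ih =>
    have h := S.isMin_unique hx.1 hy.1
    intro i hi
    rcases Nat.lt_succ_iff_lt_or_eq.mp hi with hi | rfl
    · refine ih hx.2 ?_ i hi
      rw [h]; exact hy.2
    · exact h

/-- The least nonnegative `ζ` whose addition lowers the count of class `b` by exactly one
while raising every other count by at most the budget `B`. -/
lemma exists_move {b : ZMod f} {B τ₀ : ZMod f → ℤ} (hB : ∀ c, c ≠ b → 0 ≤ B c) (hBb : B b = -1)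
    (h0 : ∀ c, 0 ≤ τ₀ c) (h1 : ∀ c, S.p * τ₀ (c + 1) - B c ≤ τ₀ c) :
    ∃ ζ : ZMod f → ℤ, (∀ c, 0 ≤ ζ c) ∧ S.p * ζ (b + 1) - ζ b = -1 ∧
      (∀ c, c ≠ b → 0 ≤ S.p * ζ (c + 1) - ζ c ∧ S.p * ζ (c + 1) - ζ c ≤ B c) ∧
      (∀ τ : ZMod f → ℤ, (∀ c, 0 ≤ τ c) → (∀ c, S.p * τ (c + 1) - B c ≤ τ c) →
        ∀ c, ζ c ≤ τ c) := by
  have hp := S.p_pos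
  obtain ⟨ζ, h2, h3, h4, h5⟩ := S.exists_least (fun _ => 0) B τ₀ (fun _ => le_rfl) h0 h1
  refine ⟨ζ, h2, ?_, fun c hc => ?_, h5⟩
  · rcases h4 b with h | h
    · have := h3 b
      have := h2 (b + 1)
      rw [hBb] at *
      nlinarith
    · rw [hBb] at h; linarith
  · have := h3 c
    have := h2 (c + 1)
    have := hB c hc
    refine ⟨?_, by linarith⟩
    rcases h4 c with h | h
    · rw [h]; nlinarith
    · linarith

/-- The counts of consecutive greedy vectors are nested. Otherwise there is a move
`ζ` such that `y + ζ` lowers a count of `y` exceeding that of `a`; by convexity the passage from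
`y`, `a` to `y + ζ`, `a - ζ` does not increase the total value, contradicting the unique minimality
of `y` and the minimality of `a`. -/
lemma cnt_le_of_nested {i : ℤ} {u a y : ZMod f → ℤ} (ha : S.IsMin (i + 1) u a)
    (hy : S.IsMin i (fun c => a c - 1) y) (b : ZMod f) : S.cnt y b ≤ S.cnt a b := by
  by_contra hcon
  push Not at hcon
  have hp := S.p_pos
  set B : ZMod f → ℤ := fun c => if c = b then -1 else max (S.cnt a c - S.cnt y c) 0 with hB
  have hy1 := hy.2.2.1
  have hτ0 : ∀ c, 0 ≤ a c - 1 - y c := fun c => by have := hy1 c; simp only at this; omega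
  have hτ1 : ∀ c, S.p * (a (c + 1) - 1 - y (c + 1)) - B c ≤ a c - 1 - y c := by
    intro c
    have h1 : S.cnt a c - S.cnt y c - (S.p - 1) ≤ B c := by
      simp only [hB]; split_ifs with h
      · subst h; omega
      · omega
    simp only [cnt] at h1
    linarith
  obtain ⟨ζ, h1, h2, h3, h4⟩ := S.exists_move (b := b) (B := B)
    (τ₀ := fun c => a c - 1 - y c) (fun c hc => by simp [hB, hc]) (by simp [hB]) hτ0 hτ1
  have h5 := h4 _ hτ0 hτ1
  have hv : ∀ c, min (S.cnt y c) (S.cnt a c) ≤ S.cnt (fun c => y c + ζ c) c ∧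
      S.cnt (fun c => y c + ζ c) c ≤ max (S.cnt y c) (S.cnt a c) := by
    intro c
    rw [cnt_add]
    by_cases hc : c = b
    · subst hc; omega
    · have := h3 c hc
      simp only [hB, if_neg hc] at this
      omega
  have hsum : ∀ c, S.cnt (fun c => y c + ζ c) c + S.cnt (fun c => a c - ζ c) c
      = S.cnt y c + S.cnt a c := by
    intro c; rw [cnt_add, cnt_sub]; ring
  have hF1 : S.Feas (fun c => y c + ζ c) := fun c => by
    have := hv c; have := ha.1 c; have := hy.1 c; omega
  have hF2 : S.Feas (fun c => a c - ζ c) := fun c => by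
    have := hv c; have := hsum c; have := ha.1 c; have := hy.1 c; omega
  have hw := S.val_convex hF1 hF2 hy.1 ha.1 hsum (fun c => (hv c).1) (fun c => (hv c).2)
  have hw1 : S.w y ≤ S.w (fun c => y c + ζ c) := hy.2.2.2 _ hF1
    (fun c => by have := h1 c; have := hy.2.1 c; omega)
    (fun c => by have := h5 c; simp only; omega)
  have hw2 : S.w a ≤ S.w (fun c => a c - ζ c) := ha.2.2.2 _ hF2
    (fun c => by have := h5 c; have := hy.2.1 c; omega)
    (fun c => by have := h1 c; have := ha.2.2.1 c; omega)
  have heq := S.val_inj hF1 hy.1 (by unfold w at *; omega)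
  have := congrFun heq b
  rw [cnt_add] at this
  omega

/-- Suppose that `y` is cheapest below `a - 1`, and that `y'`, below `x' - 1`, has lost a coin of
position `J` in comparison with `y`. If `a` uses, in the classes where `a < x'`, no coins at position
`J + f` or above, then the move losing that coin already stays below `a - 1`, a contradiction. -/
lemma main_pair {i : ℤ} {a x' y y' : ZMod f → ℤ} {J : ℕ}
    (hy : S.IsMin i (fun c => a c - 1) y) (hy' : ∀ c, y' c ≤ x' c - 1)
    (hyy : ∀ c, y c ≤ y' c) (hJ1 : ∀ c, S.cnt y' c ≤ max (S.cnt y c) (S.cum c J))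
    (hJ2 : S.cnt y' J < S.cnt y J) (hJ3 : S.cum J J < S.cnt y J)
    (hw : ∀ c, a c < x' c → S.cnt a c ≤ S.cum c (J + f)) : False := by
  have hp := S.p_pos
  set b : ZMod f := (J : ZMod f) with hb
  set B : ZMod f → ℤ := fun c => if c = b then -1 else
    max (S.cnt y c) (S.cum c J) - S.cnt y c with hB
  have hτ0 : ∀ c, 0 ≤ y' c - y c := fun c => by have := hyy c; omega
  have hτ1 : ∀ c, S.p * (y' (c + 1) - y (c + 1)) - B c ≤ y' c - y c := by
    intro c
    have h1 : S.cnt y' c - S.cnt y c ≤ B c := by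
      simp only [hB]; split_ifs with h
      · subst h; omega
      · have := hJ1 c; omega
    simp only [cnt] at h1
    linarith
  obtain ⟨ζ, h1, h2, h3, h4⟩ := S.exists_move (b := b) (B := B)
    (τ₀ := fun c => y' c - y c) (fun c hc => by simp [hB, hc]) (by simp [hB]) hτ0 hτ1
  have h5 := h4 _ hτ0 hτ1
  have hBle : ∀ c, S.p * ζ (c + 1) - ζ c ≤ B c := by
    intro c
    by_cases hc : c = b
    · subst hc; rw [h2]; simp [hB]
    · exact (h3 c hc).2
  have hay : ∀ c, y c ≤ a c - 1 := hy.2.2.1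
  have hbox : ∀ c, ζ c ≤ a c - 1 - y c := by
    have h6 := h4 (fun c => min (ζ c) (a c - 1 - y c))
      (fun c => le_min (h1 c) (by have := hay c; omega)) (fun c => ?_)
    · intro c; have := h6 c; omega
    · rcases le_or_gt (ζ c) (a c - 1 - y c) with hc | hc
      · rw [min_eq_left hc]
        have := hBle c
        have h7 : min (ζ (c + 1)) (a (c + 1) - 1 - y (c + 1)) ≤ ζ (c + 1) := min_le_left _ _
        nlinarith
      · rw [min_eq_right hc.le]
        have h7 : min (ζ (c + 1)) (a (c + 1) - 1 - y (c + 1)) ≤ a (c + 1) - 1 - y (c + 1) :=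
          min_le_right _ _
        have h8 := hw c (by have := h5 c; have := hy' c; omega)
        have h9 := S.cum_window c J
        have h10 : S.cnt a c - S.cnt y c - (S.p - 1) ≤ B c := by
          simp only [hB]; split_ifs with h
          · subst h; omega
          · omega
        have h11 : (S.p : ℤ) * min (ζ (c + 1)) (a (c + 1) - 1 - y (c + 1))
            ≤ S.p * (a (c + 1) - 1 - y (c + 1)) := by nlinarith
        simp only [cnt] at h10
        linarith
  have hvle : ∀ c, S.cnt (fun c => y c + ζ c) c ≤ max (S.cnt y c) (S.cum c J) := by
    intro c
    rw [cnt_add]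
    by_cases hc : c = b
    · subst hc; omega
    · have := (h3 c hc).2
      simp only [hB, if_neg hc] at this
      omega
  have hvb : S.cnt (fun c => y c + ζ c) b < S.cnt y b := by rw [cnt_add]; omega
  have hJD : J < S.D := by
    by_contra hcon
    have := S.cum_mono b (not_lt.mp hcon)
    have := (hy.1 b).2
    omega
  have hF : S.Feas (fun c => y c + ζ c) := by
    intro c
    refine ⟨?_, (hvle c).trans (max_le (hy.1 c).2 (S.cum_mono c hJD.le))⟩
    rw [cnt_add]
    by_cases hc : c = b
    · subst hc
      have := S.cum_nonneg b J
      omega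
    · have := (h3 c hc).1
      have := (hy.1 c).1
      omega
  have hlt := S.val_lt_of_lost hF hy.1 hy.1 (fun _ => rfl) hvle hvb hJ3
  have := hy.2.2.2 _ hF (fun c => by have := hy.2.1 c; have := h1 c; omega)
    (fun c => by have := hbox c; simp only; omega)
  unfold w at this
  omega

/-- If no vector between `a` and `x'` is cheaper than both, and their choices agree above position
`Z`, then `a` uses no coin above `Z` in a class where `a < x'`: such a coin could be exchanged away. -/
lemma step_low {a x' : ZMod f → ℤ} (ha : S.Feas a) (hx' : S.Feas x') (hax : ∀ c, a c ≤ x' c)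
    {Z R : ℕ} (hag : ∀ c, max (S.cnt a c) (S.cum c (Z + 1)) = max (S.cnt x' c) (S.cum c (Z + 1)))
    (H : ∀ v, S.Feas v → (∀ c, a c ≤ v c) → (∀ c, v c ≤ x' c) → S.w a ≤ S.w v ∨ S.w x' ≤ S.w v)
    (hR : Z + 1 ≤ R) (c : ZMod f) (hc : a c < x' c) : S.cnt a c ≤ S.cum c R := by
  by_contra hcon
  push Not at hcon
  have h1 := S.cum_mono c hR
  have h2 := hag c
  have h3 := S.cum_nonneg c R
  obtain ⟨v, hv, hv1, hv2, hv3, hv4⟩ := S.exists_exchange ha hx' hax hc (by omega) (by omega)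
  have h4 : ∀ d, S.cnt v d ≤ max (S.cnt a d) (S.cum d R) := fun d => by
    have := hv4 d
    have := hag d
    have := S.cum_mono d hR
    omega
  have h5 := S.val_lt_of_lost hv ha ha (fun _ => rfl) h4 (b := c) (by omega) hcon
  have h6 := S.val_lt_of_lost hv ha hx' (J := R) (fun d => by
    have := hag d
    have := S.cum_mono d hR
    omega) h4 (b := c) (by omega) hcon
  have := H v hv hv1 hv2
  unfold w at this
  omega

/-- When the upper vector changes from `a` to `x'` with top difference at most `Z`, the cheapest
vector below it loses a coin at a position `J` that is lower by at least `f` (by at least `f + 1` when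
`p = 2` and `x'` has more coins than `a` in the class of `Z`). -/
lemma gap {i : ℤ} {a x' y y' : ZMod f → ℤ} {Z J : ℕ} (ha : S.Feas a) (hx' : S.Feas x')
    (hax : ∀ c, a c ≤ x' c)
    (hag : ∀ c, max (S.cnt a c) (S.cum c (Z + 1)) = max (S.cnt x' c) (S.cum c (Z + 1)))
    (H : ∀ v, S.Feas v → (∀ c, a c ≤ v c) → (∀ c, v c ≤ x' c) → S.w a ≤ S.w v ∨ S.w x' ≤ S.w v)
    (hy : S.IsMin i (fun c => a c - 1) y) (hy' : S.IsMin i (fun c => x' c - 1) y')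
    (hJ1 : ∀ c, S.cnt y' c ≤ max (S.cnt y c) (S.cum c J))
    (hJ2 : S.cnt y' J < S.cnt y J) (hJ3 : S.cum J J < S.cnt y J) :
    J + f ≤ Z ∧ (S.p = 2 → S.cnt a Z < S.cnt x' Z → J + f + 1 ≤ Z) := by
  have hyy := (S.isMin_mono hy hy' (fun c => by have := hax c; omega)).1
  have h1 : J + f ≤ Z := by
    by_contra hcon
    exact S.main_pair hy hy'.2.2.1 hyy hJ1 hJ2 hJ3
      (S.step_low ha hx' hax hag H (by omega))
  refine ⟨h1, fun hp2 hZ => ?_⟩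
  by_contra hcon
  have hZJ : Z = J + f := by omega
  refine S.main_pair hy hy'.2.2.1 hyy hJ1 hJ2 hJ3 (fun c hc => ?_)
  rw [← hZJ]
  by_cases hcZ : (Z : ZMod f) = c
  · subst hcZ
    have h2 := hag Z
    have h3 := S.cum_succ Z Z
    have h4 := S.dig_lt Z
    rw [if_pos rfl] at h3
    omega
  · rw [← S.cum_succ_of_ne hcZ]
    exact S.step_low ha hx' hax hag H le_rfl c hc

/-- The total saving in a greedy chain when its upper bound moves from `a - 1` to `x' - 1`. By
`gap` the individual savings decrease geometrically with ratio `p ^ f`. -/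
lemma savings {l : ℕ} {a x' : ZMod f → ℤ} {x y' : ℕ → ZMod f → ℤ} {Z : ℕ} (ha : S.Feas a)
    (hx' : S.Feas x') (hax : ∀ c, a c ≤ x' c)
    (hag : ∀ c, max (S.cnt a c) (S.cum c (Z + 1)) = max (S.cnt x' c) (S.cum c (Z + 1)))
    (H : ∀ v, S.Feas v → (∀ c, a c ≤ v c) → (∀ c, v c ≤ x' c) → S.w a ≤ S.w v ∨ S.w x' ≤ S.w v)
    (hx : S.Greedy l (fun c => a c - 1) x) (hy' : S.Greedy l (fun c => x' c - 1) y') :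
    (S.p : ℤ) ^ f * ∑ i ∈ Finset.range l, S.w (x i)
      ≤ (S.p : ℤ) ^ f * ∑ i ∈ Finset.range l, S.w (y' i) + 2 * (S.p : ℤ) ^ (Z + 1) := by
  have hp := S.p_pos
  induction l generalizing a x' Z with
  | zero => simp
  | succ l ih =>
    obtain ⟨hm1, hm2⟩ := S.isMin_mono hx.1 hy'.1 (fun c => by have := hax c; omega)
    have hZ0 : (0:ℤ) ≤ 2 * (S.p : ℤ) ^ (Z + 1) := by positivity
    rcases hm2.eq_or_lt with heq | hlt
    · have h := S.w_inj hy'.1.1 hx.1.1 heq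
      have h2 := hy'.2
      rw [h] at h2
      have h3 := S.greedy_unique hx.2 h2
      rw [Finset.sum_range_succ, Finset.sum_range_succ, h,
        Finset.sum_congr rfl (fun i hi => by rw [h3 i (Finset.mem_range.mp hi)])]
      omega
    · obtain ⟨J, hJD, hJ0, hJ1, hJ2, hJ3⟩ := S.exists_lost hx.1.1 hy'.1.1 hlt
      have hgap := (S.gap ha hx' hax hag H hx.1 hy'.1 hJ1 hJ2 hJ3).1
      have h1 := ih hx.1.1 hy'.1.1 hm1 hJ0 (fun v hv hv1 hv2 => Or.inr
        (hy'.1.2.2.2 v hv (fun c => (hx.1.2.1 c).trans (hv1 c))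
          (fun c => (hv2 c).trans (hy'.1.2.2.1 c)))) hx.2 hy'.2
      have h2 : S.w (x l) < S.w (y' l) + (S.p : ℤ) ^ (J + 1) :=
        S.val_lt_add_of_agree hJD hx.1.1 hy'.1.1 hJ0
      have h3 : (S.p : ℤ) ^ f * (S.p : ℤ) ^ (J + 1) ≤ (S.p : ℤ) ^ (Z + 1) := by
        rw [← pow_add]; exact pow_le_pow_right₀ (by omega) (by omega)
      have h4 : (2:ℤ) ≤ (S.p : ℤ) ^ f :=
        hp.trans (le_self_pow₀ (by omega) (NeZero.ne f))
      have h5 : (0:ℤ) < (S.p : ℤ) ^ (J + 1) := by positivity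
      rw [Finset.sum_range_succ, Finset.sum_range_succ, mul_add, mul_add]
      nlinarith

/-- Between `a` and `x'` there is a feasible vector that has fewer coins of class `b` than
`x'` and exceeds the counts of `x'` in at most one class, and there by one only. It is found by
decomposing `x' - a` into moves, each lowering a single count by one. -/
lemma conformal {a x' : ZMod f → ℤ} (ha : S.Feas a) (hx' : S.Feas x') (hax : ∀ c, a c ≤ x' c)
    {b : ZMod f} (hb : S.cnt a b < S.cnt x' b) :
    ∃ v, S.Feas v ∧ (∀ c, a c ≤ v c) ∧ (∀ c, v c ≤ x' c) ∧ S.cnt v b < S.cnt x' b ∧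
      ((∀ c, S.cnt v c ≤ S.cnt x' c) ∨ ∃ z, S.cnt v z = S.cnt x' z + 1 ∧ S.cnt v z ≤ S.cnt a z ∧
        ∀ c, c ≠ z → S.cnt v c ≤ S.cnt x' c) := by
  have hp := S.p_pos
  obtain ⟨n, hn⟩ : ∃ n : ℕ, (∑ c, (x' c - a c)) ≤ n := ⟨(∑ c, (x' c - a c)).toNat, Int.self_le_toNat _⟩
  induction n generalizing a with
  | zero =>
    exfalso
    have h1 : ∀ c, x' c - a c = 0 := fun c => by
      have := Finset.single_le_sum (f := fun c => x' c - a c)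
        (fun c _ => by have := hax c; omega) (Finset.mem_univ c)
      have := hax c
      omega
    have : a = x' := funext fun c => by have := h1 c; omega
    rw [this] at hb
    omega
  | succ n ih =>
    by_cases hall : ∀ c, S.cnt a c ≤ S.cnt x' c
    · exact ⟨a, ha, fun _ => le_rfl, hax, hb, Or.inl hall⟩
    push Not at hall
    obtain ⟨z, hz⟩ := hall
    have hzb : b ≠ z := by rintro rfl; omega
    set B : ZMod f → ℤ := fun c => if c = z then -1 else max (S.cnt x' c - S.cnt a c) 0 with hB
    have hτ0 : ∀ c, 0 ≤ x' c - a c := fun c => by have := hax c; omega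
    have hτ1 : ∀ c, S.p * (x' (c + 1) - a (c + 1)) - B c ≤ x' c - a c := by
      intro c
      have h1 : S.cnt x' c - S.cnt a c ≤ B c := by
        simp only [hB]; split_ifs with h
        · subst h; omega
        · omega
      simp only [cnt] at h1
      linarith
    obtain ⟨ζ, h1, h2, h3, h4⟩ := S.exists_move (b := z) (B := B)
      (τ₀ := fun c => x' c - a c) (fun c hc => by simp [hB, hc]) (by simp [hB]) hτ0 hτ1
    have h5 := h4 _ hτ0 hτ1
    have h6 : ∀ c, c ≠ z → 0 ≤ S.p * ζ (c + 1) - ζ c ∧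
        S.p * ζ (c + 1) - ζ c ≤ max (S.cnt x' c - S.cnt a c) 0 := fun c hc => by
      have := h3 c hc
      simpa only [hB, if_neg hc] using this
    by_cases hb' : S.p * ζ (b + 1) - ζ b = 0
    · have hF : S.Feas (fun c => a c + ζ c) := fun c => by
        rw [cnt_add]
        have := ha c
        have := hx' c
        by_cases hc : c = z
        · subst hc; omega
        · have := h6 c hc; omega
      have hζz : 1 ≤ ζ z := by have := h1 (z + 1); nlinarith
      have hs : ∑ c, (x' c - (a c + ζ c)) ≤ n := by
        have : 1 ≤ ∑ c, ζ c :=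
          hζz.trans (Finset.single_le_sum (fun c _ => h1 c) (Finset.mem_univ z))
        have : ∑ c, (x' c - (a c + ζ c)) = ∑ c, (x' c - a c) - ∑ c, ζ c := by
          rw [← Finset.sum_sub_distrib]; exact Finset.sum_congr rfl fun c _ => by ring
        push_cast at hn
        omega
      obtain ⟨v, hv, hv1, hv2, hv3, hv4⟩ := ih hF (fun c => by have := h5 c; omega)
        (by rw [cnt_add, hb']; omega) hs
      refine ⟨v, hv, fun c => by have := hv1 c; have := h1 c; omega, hv2, hv3, ?_⟩
      rcases hv4 with hv4 | ⟨z', hz1, hz2, hz3⟩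
      · exact Or.inl hv4
      · refine Or.inr ⟨z', hz1, ?_, hz3⟩
        rw [cnt_add] at hz2
        by_cases hc : z' = z
        · subst hc; omega
        · have := h6 z' hc; omega
    · refine ⟨fun c => x' c - ζ c, fun c => ?_, fun c => by have := h5 c; simp only; omega,
        fun c => by have := h1 c; simp only; omega, ?_, Or.inr ⟨z, ?_, ?_, fun c hc => ?_⟩⟩
      · rw [cnt_sub]
        have := ha c
        have := hx' c
        by_cases hc : c = z
        · subst hc; omega
        · have := h6 c hc; omega
      · rw [cnt_sub]; have := h6 b hzb; omega
      · rw [cnt_sub]; omega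
      · rw [cnt_sub]; omega
      · rw [cnt_sub]; have := h6 c hc; omega

/-- Moving up from the cheapest vector `a` to `x'`, with a coin gained at the top position
`Z`, costs at least `(1 - 1 / p) p ^ Z`. -/
lemma jump {a x' : ZMod f → ℤ} (ha : S.Feas a) (hx' : S.Feas x') (hax : ∀ c, a c ≤ x' c)
    (H : ∀ v, S.Feas v → (∀ c, a c ≤ v c) → (∀ c, v c ≤ x' c) → S.w a ≤ S.w v) {Z : ℕ}
    (hZ1 : ∀ c, S.cnt a c ≤ max (S.cnt x' c) (S.cum c Z)) (hZ2 : S.cnt a Z < S.cnt x' Z)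
    (hZ3 : S.cum Z Z < S.cnt x' Z) :
    (S.p : ℤ) * S.w a + (S.p - 1) * (S.p : ℤ) ^ Z ≤ S.p * S.w x' := by
  have hp := S.p_pos
  have hpZ : (0:ℤ) < (S.p : ℤ) ^ Z := by positivity
  obtain ⟨v, hv, hv1, hv2, hv3, hv4⟩ := S.conformal ha hx' hax hZ2
  have h1 := H v hv hv1 hv2
  rcases hv4 with hv4 | ⟨z, hz1, hz2, hz3⟩
  · have h2 : S.w v + (S.p : ℤ) ^ Z ≤ S.w x' := S.val_add_le hv hx' hv4 hv3 hZ3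
    nlinarith
  · have hbz : (Z : ZMod f) ≠ z := by
      intro h
      rw [h] at hv3
      omega
    have h2 := S.val_le_update (J := Z) hv hz1 (by have := hZ1 z; omega)
    have hle : ∀ c, Function.update (S.cnt v) z (S.cnt x' z) c ≤ S.cnt x' c := by
      intro c
      by_cases hc : c = z
      · subst hc; rw [Function.update_self]
      · rw [Function.update_of_ne hc]; exact hz3 c hc
    have hadm : S.Adm (Function.update (S.cnt v) z (S.cnt x' z)) := by
      intro c
      refine ⟨?_, (hle c).trans (hx' c).2⟩
      by_cases hc : c = z
      · subst hc; rw [Function.update_self]; exact (hx' c).1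
      · rw [Function.update_of_ne hc]; exact (hv c).1
    have h3 := S.val_add_le hadm hx' hle (b := (Z : ZMod f))
      (by rw [Function.update_of_ne hbz]; exact hv3) hZ3
    unfold w at *
    nlinarith

/-- Raising the top vector of a greedy chain costs strictly more than what can be saved in the
lower vectors. -/
lemma key_strict {l : ℕ} {u a b₁ : ZMod f → ℤ} {x y' : ℕ → ZMod f → ℤ} (ha : S.IsMin l u a)
    (hb : S.Feas b₁) (hab : ∀ c, a c ≤ b₁ c) (hbu : ∀ c, b₁ c ≤ u c) (hne : a ≠ b₁)
    (hx : S.Greedy l (fun c => a c - 1) x) (hy' : S.Greedy l (fun c => b₁ c - 1) y') :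
    ∑ i ∈ Finset.range l, S.w (x i) + S.w a < ∑ i ∈ Finset.range l, S.w (y' i) + S.w b₁ := by
  have hp := S.p_pos
  have H : ∀ v, S.Feas v → (∀ c, a c ≤ v c) → (∀ c, v c ≤ b₁ c) → S.w a ≤ S.w v :=
    fun v hv h1 h2 => ha.2.2.2 v hv (fun c => (ha.2.1 c).trans (h1 c))
      (fun c => (h2 c).trans (hbu c))
  have hlt : S.w a < S.w b₁ := lt_of_le_of_ne (H b₁ hb hab fun _ => le_rfl)
    (fun h => hne (S.w_inj ha.1 hb h))
  rcases l with _ | l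
  · simpa using hlt
  obtain ⟨hm1, hm2⟩ := S.isMin_mono hx.1 hy'.1 (fun c => by have := hab c; omega)
  rcases hm2.eq_or_lt with heq | hlt2
  · have h := S.w_inj hy'.1.1 hx.1.1 heq
    have h2 := hy'.2
    rw [h] at h2
    have h3 := S.greedy_unique hx.2 h2
    rw [Finset.sum_range_succ, Finset.sum_range_succ, h,
      Finset.sum_congr rfl (fun i hi => by rw [h3 i (Finset.mem_range.mp hi)])]
    omega
  obtain ⟨J, hJD, hJ0, hJ1, hJ2, hJ3⟩ := S.exists_lost hx.1.1 hy'.1.1 hlt2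
  obtain ⟨Z, hZD, hZ0, hZ1, hZ2, hZ3⟩ := S.exists_lost hb ha.1 hlt
  have hf : 2 ≤ f := by
    by_contra hcon
    have hf1 : f = 1 := by have := NeZero.ne f; omega
    subst hf1
    have hc : ∀ c : ZMod 1, c + 1 = c := fun c => Subsingleton.elim _ _
    simp only [cnt, hc] at hJ2
    have := hm1 J
    nlinarith
  obtain ⟨hg1, hg2⟩ := S.gap ha.1 hb hab (fun c => (hZ0 c).symm)
    (fun v hv h1 h2 => Or.inl (H v hv h1 h2)) hx.1 hy'.1 hJ1 hJ2 hJ3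
  have h1 := S.savings hx.1.1 hy'.1.1 hm1 hJ0 (fun v hv hv1 hv2 => Or.inr
        (hy'.1.2.2.2 v hv (fun c => (hx.1.2.1 c).trans (hv1 c))
          (fun c => (hv2 c).trans (hy'.1.2.2.1 c)))) hx.2 hy'.2
  have h2 : S.w (x l) < S.w (y' l) + (S.p : ℤ) ^ (J + 1) :=
    S.val_lt_add_of_agree hJD hx.1.1 hy'.1.1 hJ0
  have h3 := S.jump ha.1 hb hab H hZ1 hZ2 hZ3
  have h4 : (2:ℤ) ≤ (S.p : ℤ) ^ f := hp.trans (le_self_pow₀ (by omega) (NeZero.ne f))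
  have h5 : (0:ℤ) < (S.p : ℤ) ^ (J + 1) := by positivity
  have h6 : 2 * (S.p * (S.p : ℤ) ^ (J + 1)) ≤ (S.p - 1) * (S.p : ℤ) ^ Z := by
    rw [← pow_succ']
    rcases S.two_le.eq_or_lt with h2 | h2
    · have h7 : (S.p : ℤ) ^ (J + 1 + 1 + 1) ≤ (S.p : ℤ) ^ Z :=
        pow_le_pow_right₀ (by omega) (by have := hg2 h2.symm hZ2; omega)
      rw [pow_succ'] at h7
      have : (S.p : ℤ) = 2 := by omega
      rw [this] at h7 ⊢
      linarith
    · have h7 : (S.p : ℤ) ^ (J + 1 + 1) ≤ (S.p : ℤ) ^ Z :=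
        pow_le_pow_right₀ (by omega) (by omega)
      have h8 : (0:ℤ) < (S.p : ℤ) ^ (J + 1 + 1) := by positivity
      have : (3:ℤ) ≤ S.p := by omega
      nlinarith
  rw [Finset.sum_range_succ, Finset.sum_range_succ]
  set A := ∑ i ∈ Finset.range l, S.w (x i)
  set A' := ∑ i ∈ Finset.range l, S.w (y' i)
  -- savings below are less than `2 * p ^ (J + 1)`, the cost above at least that
  have h8 : A ≤ A' + (S.p : ℤ) ^ (J + 1) := by
    by_contra hcon
    push Not at hcon
    nlinarith
  have h9 : 2 * (S.p : ℤ) ^ (J + 1) ≤ S.w b₁ - S.w a := by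
    by_contra hcon
    push Not at hcon
    nlinarith
  linarith

lemma fam_mono {l : ℕ} {u u' : ZMod f → ℤ} {x : ℕ → ZMod f → ℤ} (h : S.Fam l u x)
    (hu : ∀ c, u c ≤ u' c) : S.Fam l u' x := by
  cases l with
  | zero => trivial
  | succ l => exact ⟨h.1, h.2.1, fun c => (h.2.2.1 c).trans (hu c), h.2.2.2⟩

/-- The greedy chain is the unique chain of least total cost. If a competitor has its top
vector not below that of the greedy chain, replace it by the join with the greedy one, which costs no
more by submodularity, and apply `key_strict`. -/
theorem greedy_optimal {l : ℕ} {u : ZMod f → ℤ} {x x' : ℕ → ZMod f → ℤ} (hx : S.Greedy l u x)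
    (hx' : S.Fam l u x') :
    ∑ i ∈ Finset.range l, S.w (x i) ≤ ∑ i ∈ Finset.range l, S.w (x' i) ∧
    (∑ i ∈ Finset.range l, S.w (x i) = ∑ i ∈ Finset.range l, S.w (x' i) →
      ∀ i < l, x i = x' i) := by
  induction l generalizing u x with
  | zero => simp
  | succ l ih =>
    rw [Finset.sum_range_succ, Finset.sum_range_succ]
    obtain ⟨hm, hg⟩ := hx
    obtain ⟨hb, hb1, hb2, hfam⟩ := hx'
    have hw := hm.2.2.2 _ hb hb1 hb2
    by_cases hle : ∀ c, x' l c ≤ x l c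
    · obtain ⟨h1, h2⟩ := ih hg (S.fam_mono hfam (fun c => by have := hle c; omega))
      refine ⟨by omega, fun heq i hi => ?_⟩
      rcases Nat.lt_succ_iff_lt_or_eq.mp hi with hi | rfl
      · exact h2 (by omega) i hi
      · exact S.w_inj hm.1 hb (by omega)
    · obtain ⟨hF1, hF2, hsub⟩ := S.submod hm.1 hb
      have h1 : S.w (x l) ≤ S.w (x l ⊓ x' l) := hm.2.2.2 _ hF1
        (fun c => le_min (hm.2.1 c) (hb1 c)) (fun c => (min_le_left _ _).trans (hm.2.2.1 c))
      obtain ⟨y', hy'⟩ := S.greedy_exists (l := l) (u := fun c => (x l ⊔ x' l) c - 1) (fun hl =>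
        S.exists_below hF2 (l := (l : ℤ) - 1) (by omega) (fun c => by
          have : x l c ≤ (x l ⊔ x' l) c := le_max_left _ _
          have := hm.2.1 c
          omega))
      have h2 := (ih hy' (S.fam_mono hfam (fun c => by
        have : x' l c ≤ (x l ⊔ x' l) c := le_max_right _ _
        omega))).1
      have h3 := S.key_strict hm hF2 (fun c => le_max_left _ _)
        (fun c => max_le (hm.2.2.1 c) (hb2 c)) (fun h => hle fun c => by
          rw [h]; exact le_max_right _ _) hg hy'
      exact ⟨by omega, fun heq => by omega⟩

end CoinSys

/-! ### Class counts and residues modulo `p ^ f - 1` -/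

namespace CoinSys

variable {f : ℕ} [NeZero f]

/-- The cyclic weighted sum of a count vector, read from the class `b` on. -/
def CC (p : ℕ) (n : ZMod f → ℤ) (b : ZMod f) : ℤ :=
  ∑ r ∈ Finset.range f, (p : ℤ) ^ r * n (b + r)

lemma CC_shift (p : ℕ) (n : ZMod f → ℤ) (c : ZMod f) :
    p * CC p n (c + 1) - CC p n c = ((p : ℤ) ^ f - 1) * n c := by
  unfold CC
  have h := Finset.sum_range_sub (fun r => (p : ℤ) ^ r * n (c + r)) f
  rw [Finset.sum_sub_distrib] at h
  have h2 : (p : ℤ) * ∑ r ∈ Finset.range f, (p : ℤ) ^ r * n (c + 1 + r)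
      = ∑ r ∈ Finset.range f, (p : ℤ) ^ (r + 1) * n (c + (r + 1 : ℕ)) := by
    rw [Finset.mul_sum]
    refine Finset.sum_congr rfl fun r _ => ?_
    have : c + 1 + (r : ZMod f) = c + (r + 1 : ℕ) := by push_cast; ring
    rw [this]; ring
  rw [h2, h]
  simp
  ring

lemma coprime_aux (p : ℕ) : IsCoprime ((p : ℤ) ^ f - 1) (p : ℤ) := by
  obtain ⟨g, hg⟩ := Nat.exists_eq_succ_of_ne_zero (NeZero.ne f)
  refine ⟨-1, (p : ℤ) ^ g, ?_⟩
  rw [hg, pow_succ]; ring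

lemma CC_congr (p : ℕ) {n n' : ZMod f → ℤ} (h : (p : ℤ) ^ f - 1 ∣ CC p n 0 - CC p n' 0)
    (b : ZMod f) : (p : ℤ) ^ f - 1 ∣ CC p n b - CC p n' b := by
  have key : ∀ i : ℕ, (p : ℤ) ^ f - 1 ∣ CC p n i - CC p n' i := by
    intro i
    induction i with
    | zero => simpa using h
    | succ i ih =>
      refine (coprime_aux (f := f) p).dvd_of_dvd_mul_left ?_
      have h1 := CC_shift p n i
      have h2 := CC_shift p n' i
      have : (p : ℤ) * (CC p n (i + 1 : ℕ) - CC p n' (i + 1 : ℕ))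
          = (CC p n i - CC p n' i) + ((p : ℤ) ^ f - 1) * (n i - n' i) := by
        push_cast; linarith
      rw [this]
      exact dvd_add ih (dvd_mul_right _ _)
  have := key b.val
  rwa [ZMod.natCast_zmod_val] at this

/-- The class counts of a choice of `T j` coins of denomination `p ^ j`, `j < D`. -/
def cls (D : ℕ) (T : ℕ → ℤ) (c : ZMod f) : ℤ :=
  ∑ j ∈ Finset.range D, if (j : ZMod f) = c then T j else 0

lemma CC_cls (p D : ℕ) (T : ℕ → ℤ) (b : ZMod f) :
    CC p (cls D T) b = ∑ j ∈ Finset.range D, T j * (p : ℤ) ^ ((j : ZMod f) - b).val := by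
  unfold CC cls
  simp_rw [Finset.mul_sum]
  rw [Finset.sum_comm]
  refine Finset.sum_congr rfl fun j _ => ?_
  rw [Finset.sum_eq_single ((j : ZMod f) - b).val]
  · rw [ZMod.natCast_zmod_val, if_pos (by ring)]; ring
  · intro r hr hne
    rw [if_neg, mul_zero]
    intro h
    apply hne
    rw [h, add_sub_cancel_left, ZMod.val_natCast, Nat.mod_eq_of_lt (Finset.mem_range.mp hr)]
  · intro h
    exact absurd (Finset.mem_range.mpr (ZMod.val_lt _)) h

/-- The value of a choice of coins is determined modulo `p ^ f - 1` by its class counts. -/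
lemma sum_congr_CC (p D : ℕ) (T : ℕ → ℤ) :
    (p : ℤ) ^ f - 1 ∣ ∑ j ∈ Finset.range D, (p : ℤ) ^ j * T j - CC (f := f) p (cls D T) 0 := by
  rw [CC_cls, ← Finset.sum_sub_distrib]
  refine Finset.dvd_sum fun j _ => ?_
  rw [sub_zero, ZMod.val_natCast]
  have h1 : (p : ℤ) ^ j = (p : ℤ) ^ (j % f) * ((p : ℤ) ^ f) ^ (j / f) := by
    rw [← pow_mul, ← pow_add, Nat.mod_add_div]
  have h2 : (p : ℤ) ^ j * T j - T j * (p : ℤ) ^ (j % f)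
      = (p : ℤ) ^ (j % f) * T j * (((p : ℤ) ^ f) ^ (j / f) - 1 ^ (j / f)) := by
    rw [h1, one_pow]; ring
  rw [h2]
  exact Dvd.dvd.mul_left (sub_dvd_pow_sub_pow _ _ _) _

/-- The cheapest choice with given class counts takes the smallest coins of each class, and it
is the only cheapest one. -/
lemma val_le_sum (S : CoinSys f) {T : ℕ → ℤ} (h0 : ∀ j, 0 ≤ T j) (h1 : ∀ j, T j ≤ S.dig j) :
    S.Adm (cls S.D T) ∧ S.val (cls S.D T) ≤ ∑ j ∈ Finset.range S.D, (S.p : ℤ) ^ j * T j ∧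
    (S.val (cls S.D T) = ∑ j ∈ Finset.range S.D, (S.p : ℤ) ^ j * T j →
      ∀ j < S.D, T j = S.coin (cls S.D T (j : ZMod f)) j j) := by
  have hmono : ∀ c : ZMod f, Monotone fun J => cls J T c := fun c =>
    monotone_nat_of_le_succ fun J => by
      unfold cls; rw [Finset.sum_range_succ]
      split_ifs
      · have := h0 J; omega
      · omega
  have hcum : ∀ (c : ZMod f) J, cls J T c ≤ S.cum c J := fun c J => by
    unfold cls cum
    refine Finset.sum_le_sum fun j _ => ?_
    split_ifs
    · exact h1 j
    · exact le_rfl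
  have hz : ∀ c : ZMod f, cls 0 T c = 0 := fun c => by simp [cls]
  have hA : S.Adm (cls S.D T) := fun c => ⟨by
    rw [← hz c]; exact hmono c (Nat.zero_le _), hcum c _⟩
  have hsum : ∑ j ∈ Finset.range S.D, (S.p : ℤ) ^ j * T j
      = ∑ c : ZMod f, ((S.p : ℤ) ^ S.D * cls S.D T c - ∑ j ∈ Finset.range S.D,
        ((S.p : ℤ) ^ (j + 1) - (S.p : ℤ) ^ j) * cls (j + 1) T c) := by
    have : ∀ c : ZMod f, ((S.p : ℤ) ^ S.D * cls S.D T c - ∑ j ∈ Finset.range S.D,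
        ((S.p : ℤ) ^ (j + 1) - (S.p : ℤ) ^ j) * cls (j + 1) T c)
        = ∑ j ∈ Finset.range S.D, (S.p : ℤ) ^ j * (if (j : ZMod f) = c then T j else 0) := by
      intro c
      have h := abel (S.p : ℤ) (fun J => cls J T c) S.D
      rw [hz c, sub_zero] at h
      rw [← h]
      refine Finset.sum_congr rfl fun j _ => ?_
      unfold cls
      rw [Finset.sum_range_succ]; ring
    rw [Finset.sum_congr rfl fun c _ => this c, Finset.sum_comm]
    refine Finset.sum_congr rfl fun j _ => ?_
    rw [← Finset.mul_sum]; simp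
  have hterm : ∀ c : ZMod f, ∀ j ∈ Finset.range S.D,
      ((S.p : ℤ) ^ (j + 1) - (S.p : ℤ) ^ j) * cls (j + 1) T c ≤
      ((S.p : ℤ) ^ (j + 1) - (S.p : ℤ) ^ j) * min (cls S.D T c) (S.cum c (j + 1)) := fun c j hj =>
    mul_le_mul_of_nonneg_left (le_min (hmono c (Finset.mem_range.mp hj)) (hcum c _))
      (S.pow_step_nonneg j)
  have hc : ∀ c ∈ (Finset.univ : Finset (ZMod f)),
      ((S.p : ℤ) ^ S.D * cls S.D T c - ∑ j ∈ Finset.range S.D,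
        ((S.p : ℤ) ^ (j + 1) - (S.p : ℤ) ^ j) * min (cls S.D T c) (S.cum c (j + 1))) ≤
      ((S.p : ℤ) ^ S.D * cls S.D T c - ∑ j ∈ Finset.range S.D,
        ((S.p : ℤ) ^ (j + 1) - (S.p : ℤ) ^ j) * cls (j + 1) T c) := fun c _ => by
    have := Finset.sum_le_sum (hterm c)
    linarith
  refine ⟨hA, ?_, fun heq => ?_⟩
  · rw [S.val_abel hA, hsum]
    exact Finset.sum_le_sum hc
  · rw [S.val_abel hA, hsum, Finset.sum_eq_sum_iff_of_le hc] at heq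
    have hkey : ∀ (c : ZMod f), ∀ j ≤ S.D, cls j T c = min (cls S.D T c) (S.cum c j) := by
      intro c j hj
      rcases j with _ | j
      · rw [hz, cum_zero, min_eq_right (hA c).1]
      have h2 := heq c (Finset.mem_univ c)
      have h3 : ∑ j ∈ Finset.range S.D, ((S.p : ℤ) ^ (j + 1) - (S.p : ℤ) ^ j) * cls (j + 1) T c
          = ∑ j ∈ Finset.range S.D, ((S.p : ℤ) ^ (j + 1) - (S.p : ℤ) ^ j) *
            min (cls S.D T c) (S.cum c (j + 1)) := by linarith
      rw [Finset.sum_eq_sum_iff_of_le (hterm c)] at h3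
      have h4 := h3 j (Finset.mem_range.mpr hj)
      refine mul_left_cancel₀ ?_ h4
      have hp := S.p_pos
      have : (0:ℤ) < (S.p : ℤ) ^ j := by positivity
      rw [pow_succ]
      nlinarith
    intro j hj
    unfold coin
    rw [← hkey _ _ hj, ← hkey _ _ hj.le]
    unfold cls
    rw [Finset.sum_range_succ, if_pos rfl]; ring

/-- coins of other classes vanish -/
lemma coin_of_ne (S : CoinSys f) (n : ℤ) {c : ZMod f} {j : ℕ} (h : (j : ZMod f) ≠ c) :
    S.coin n c j = 0 := by
  unfold coin; rw [S.cum_succ_of_ne h, sub_self]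

lemma val_eq_sum_coin (S : CoinSys f) (n : ZMod f → ℤ) :
    S.val n = ∑ j ∈ Finset.range S.D, (S.p : ℤ) ^ j * S.coin (n j) j j := by
  unfold val
  rw [Finset.sum_comm]
  refine Finset.sum_congr rfl fun j _ => ?_
  rw [Finset.sum_eq_single (j : ZMod f)]
  · intro c _ hc
    rw [S.coin_of_ne _ hc.symm, mul_zero]
  · simp

lemma cls_coin (S : CoinSys f) {n : ZMod f → ℤ} (hn : S.Adm n) :
    cls S.D (fun j => S.coin (n j) j j) = n := by
  funext c
  unfold cls
  have : ∀ j ∈ Finset.range S.D, (if (j : ZMod f) = c then S.coin (n j) j j else 0)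
      = S.coin (n c) c j := by
    intro j _
    split_ifs with h
    · rw [h]
    · rw [S.coin_of_ne _ h]
  rw [Finset.sum_congr rfl this]
  unfold coin
  rw [Finset.sum_range_sub (fun j => min (n c) (S.cum c j)), cum_zero, min_eq_left (hn c).2,
    min_eq_right (hn c).1, sub_zero]

lemma coin_le_dig (S : CoinSys f) (n : ℤ) (j : ℕ) : S.coin n j j ≤ S.dig j := by
  have := S.cum_succ j j
  rw [if_pos rfl] at this
  have := S.cum_le_succ j j
  unfold coin; omega

lemma fam_of (S : CoinSys f) {l : ℕ} {u : ZMod f → ℤ} {x : ℕ → ZMod f → ℤ}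
    (h1 : ∀ i < l, S.Feas (x i)) (h2 : ∀ i < l, ∀ c, (i : ℤ) ≤ x i c)
    (h3 : ∀ i, i + 1 < l → ∀ c, x i c ≤ x (i + 1) c - 1)
    (h4 : ∀ i, i + 1 = l → ∀ c, x i c ≤ u c) : S.Fam l u x := by
  induction l generalizing u with
  | zero => trivial
  | succ l ih =>
    refine ⟨h1 l (by omega), h2 l (by omega), h4 l rfl, ih (fun i hi => h1 i (by omega))
      (fun i hi => h2 i (by omega)) (fun i hi => h3 i (by omega)) ?_⟩
    intro i hi c
    subst hi
    exact h3 i (by omega) c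

end CoinSys

/-! ### The coin system of the digits of `k` -/

namespace CoinSys

variable {f : ℕ} [NeZero f]

/-- The base-`p` digit of `k` at position `j`. -/
def kdig (p k j : ℕ) : ℕ := k / p ^ j % p

lemma sum_kdig_mod (p k D : ℕ) : ∑ j ∈ Finset.range D, p ^ j * kdig p k j = k % p ^ D := by
  induction D with
  | zero => simp [Nat.mod_one]
  | succ D ih =>
    rw [Finset.sum_range_succ, ih, kdig, pow_succ, Nat.mod_mul]

lemma sum_kdig {p : ℕ} (hp : 2 ≤ p) (k : ℕ) : ∑ j ∈ Finset.range k, p ^ j * kdig p k j = k := by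
  rw [sum_kdig_mod, Nat.mod_eq_of_lt (Nat.lt_pow_self hp)]

/-- The class counts of all the digits of `k`. -/
def Ntot (p k : ℕ) : ZMod f → ℤ := cls k (fun j => (kdig p k j : ℤ))

/-- The vector of quotients by `p ^ f - 1` of the cyclic sums of `Ntot`. -/
def pot (p k : ℕ) (b : ZMod f) : ℤ := CC p (Ntot p k) b / ((p : ℤ) ^ f - 1)

lemma Q_pos {p : ℕ} (hp : 2 ≤ p) : (0:ℤ) < (p : ℤ) ^ f - 1 := by
  have h1 : (2:ℤ) ≤ p := by exact_mod_cast hp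
  have h4 : (2:ℤ) ≤ (p : ℤ) ^ f := h1.trans (le_self_pow₀ (by omega) (NeZero.ne f))
  omega

/-- The coin system given by the base-`p` digits of `k`. The vector `ν` is chosen such that
`cnt (pot p k) = Ntot p k`; as all digits lie at positions below `k`, the bound `D = k` suffices. -/
def sysK (f : ℕ) [NeZero f] (p k : ℕ) (hp : 2 ≤ p) : CoinSys f where
  p := p
  two_le := hp
  dig := kdig p k
  dig_lt := fun j => Nat.mod_lt _ (by omega)
  D := k
  ν := fun c => Ntot p k c - (p * pot p k (c + 1) - pot p k c)
  ν_nonneg := fun c => by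
    have hQ := Q_pos (f := f) hp
    have h1 := CC_shift p (Ntot p k) c
    have h2 := Int.emod_add_mul_ediv (CC p (Ntot p k) (c + 1)) ((p : ℤ) ^ f - 1)
    have h3 := Int.emod_add_mul_ediv (CC p (Ntot p k) c) ((p : ℤ) ^ f - 1)
    have h4 := Int.emod_nonneg (CC p (Ntot p k) (c + 1)) hQ.ne'
    have h5 := Int.emod_lt_of_pos (CC p (Ntot p k) c) hQ
    unfold pot
    set Q := (p : ℤ) ^ f - 1
    set A := CC p (Ntot p k) (c + 1)
    set B := CC p (Ntot p k) c
    have hp' : (0:ℤ) ≤ p := by positivity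
    by_contra hcon
    push Not at hcon
    have h6 : Q * (Ntot p k c - (p * (A / Q) - B / Q)) = p * (A % Q) - B % Q := by
      have e1 : A = A % Q + Q * (A / Q) := h2.symm
      have e2 : B = B % Q + Q * (B / Q) := h3.symm
      calc Q * (Ntot p k c - (p * (A / Q) - B / Q))
          = Q * Ntot p k c - p * (Q * (A / Q)) + Q * (B / Q) := by ring
        _ = (p * A - B) - p * (A - A % Q) + (B - B % Q) := by
          rw [show A - A % Q = Q * (A / Q) by linarith, show B - B % Q = Q * (B / Q) by linarith, h1]
        _ = _ := by ring
    nlinarith [mul_nonneg hp' h4]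

lemma cnt_pot {p k : ℕ} (hp : 2 ≤ p) : (sysK f p k hp).cnt (pot p k) = Ntot p k := by
  funext c
  simp only [cnt, sysK]; ring

lemma CC_cnt (S : CoinSys f) (x : ZMod f → ℤ) (b : ZMod f) :
    CC S.p (S.cnt x) b = ((S.p : ℤ) ^ f - 1) * x b + CC S.p S.ν b := by
  have h := Finset.sum_range_sub (fun r => (S.p : ℤ) ^ r * x (b + r)) f
  have h2 : ∑ r ∈ Finset.range f, (S.p : ℤ) ^ r * (S.p * x (b + r + 1) - x (b + r))
      = ((S.p : ℤ) ^ f - 1) * x b := by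
    have e : ∀ r ∈ Finset.range f, (S.p : ℤ) ^ r * (S.p * x (b + r + 1) - x (b + r))
        = (S.p : ℤ) ^ (r + 1) * x (b + (r + 1 : ℕ)) - (S.p : ℤ) ^ r * x (b + r) := by
      intro r _
      push_cast
      rw [pow_succ, ← add_assoc]; ring
    rw [Finset.sum_congr rfl e, h]
    simp
    ring
  unfold CC
  rw [← h2, ← Finset.sum_add_distrib]
  refine Finset.sum_congr rfl fun r _ => ?_
  unfold cnt; ring

/-- A count vector in the residue class of `Ntot` is `cnt` of its vector of quotients. -/
lemma cnt_of_congr {p k : ℕ} (hp : 2 ≤ p) {n : ZMod f → ℤ}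
    (h : (p : ℤ) ^ f - 1 ∣ CC p n 0 - CC p (Ntot (f := f) p k) 0) :
    (sysK f p k hp).cnt (fun b => CC p n b / ((p : ℤ) ^ f - 1)) = n := by
  have hQ := Q_pos (f := f) hp
  have hmod : ∀ b, CC p n b % ((p : ℤ) ^ f - 1) = CC p (Ntot p k) b % ((p : ℤ) ^ f - 1) :=
    fun b => Int.emod_eq_emod_iff_emod_sub_eq_zero.mpr (Int.emod_eq_zero_of_dvd (CC_congr p h b))
  funext c
  have e1 := CC_shift p n c
  have e2 := CC_shift p (Ntot p k) c
  have a1 := Int.emod_add_mul_ediv (CC p n (c + 1)) ((p : ℤ) ^ f - 1)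
  have a2 := Int.emod_add_mul_ediv (CC p n c) ((p : ℤ) ^ f - 1)
  have a3 := Int.emod_add_mul_ediv (CC p (Ntot p k) (c + 1)) ((p : ℤ) ^ f - 1)
  have a4 := Int.emod_add_mul_ediv (CC p (Ntot p k) c) ((p : ℤ) ^ f - 1)
  rw [hmod] at a1 a2
  change (p : ℤ) * (CC p n (c + 1) / ((p : ℤ) ^ f - 1)) - CC p n c / ((p : ℤ) ^ f - 1) +
    (Ntot p k c - (p * (CC p (Ntot p k) (c + 1) / ((p : ℤ) ^ f - 1)) -
      CC p (Ntot p k) c / ((p : ℤ) ^ f - 1))) = n c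
  refine mul_left_cancel₀ hQ.ne' ?_
  linear_combination p * a1 - a2 - p * a3 + a4 + e1 - e2

lemma CC_mono (p : ℕ) {n n' : ZMod f → ℤ} (h : ∀ c, n c ≤ n' c) (b : ZMod f) :
    CC p n b ≤ CC p n' b :=
  Finset.sum_le_sum fun _ _ => mul_le_mul_of_nonneg_left (h _) (by positivity)

lemma CC_lt {p : ℕ} (hp : 2 ≤ p) {n n' : ZMod f → ℤ} (h : ∀ c, n c ≤ n' c) {c : ZMod f}
    (hc : n c < n' c) (b : ZMod f) : CC p n b < CC p n' b := by
  refine Finset.sum_lt_sum (fun _ _ => mul_le_mul_of_nonneg_left (h _) (by positivity))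
    ⟨(c - b).val, Finset.mem_range.mpr (ZMod.val_lt _), ?_⟩
  rw [ZMod.natCast_zmod_val, add_sub_cancel]
  exact mul_lt_mul_of_pos_left hc (by positivity)

lemma div_lt_div_of_congr {Q a b : ℤ} (hQ : 0 < Q) (h : Q ∣ a - b) (hab : a < b) :
    a / Q < b / Q := by
  have hmod : a % Q = b % Q :=
    Int.emod_eq_emod_iff_emod_sub_eq_zero.mpr (Int.emod_eq_zero_of_dvd h)
  have h1 := Int.emod_add_mul_ediv a Q
  have h2 := Int.emod_add_mul_ediv b Q
  by_contra hcon
  push Not at hcon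
  nlinarith

lemma greedy_get (S : CoinSys f) {l : ℕ} {u : ZMod f → ℤ} {x : ℕ → ZMod f → ℤ}
    (h : S.Greedy l u x) : (∀ i < l, ∃ v, S.IsMin i v (x i)) ∧
      ∀ i, i + 1 < l → S.IsMin i (fun c => x (i + 1) c - 1) (x i) := by
  induction l generalizing u with
  | zero => exact ⟨fun i hi => by omega, fun i hi => by omega⟩
  | succ l ih =>
    obtain ⟨h1, h2⟩ := ih h.2
    refine ⟨fun i hi => ?_, fun i hi => ?_⟩
    · rcases Nat.lt_succ_iff_lt_or_eq.mp hi with hi | rfl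
      · exact h1 i hi
      · exact ⟨u, h.1⟩
    · rcases Nat.lt_succ_iff_lt_or_eq.mp hi with hi | rfl
      · exact h2 i hi
      · exact h.2.1

end CoinSys

/-! ### Digit matrices and their prefix sums -/

namespace CoinSys

variable {f : ℕ} [NeZero f]

/-- The entry of `M` in row `j`, column `i`, extended by zero to rows `j ≥ k`. -/
def ext {k : ℕ} (M : Fin k → ℕ → ℕ) (j i : ℕ) : ℕ := if h : j < k then M ⟨j, h⟩ i else 0

/-- The ways to distribute the base-`p` digits of `k` over the columns `0, …, d`: row `j` sums to the
`j`-th digit and vanishes outside these columns. -/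
def Mats (p k d : ℕ) : Finset (Fin k → ℕ → ℕ) :=
  Fintype.piFinset fun j : Fin k => Finset.piAntidiag (Finset.range (d + 1)) (kdig p k j)

/-- The number whose base-`p` digits are the entries of column `i`. -/
def col (p : ℕ) {k : ℕ} (M : Fin k → ℕ → ℕ) (i : ℕ) : ℕ := ∑ j : Fin k, p ^ (j : ℕ) * M j i

/-- The matrices contributing to the restricted power sum: the columns `1, …, d` are divisible by
`p ^ f - 1`, and those strictly between `0` and `d` are nonzero. -/
def Valid (p f d : ℕ) {k : ℕ} (M : Fin k → ℕ → ℕ) : Prop :=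
  ∀ i, 1 ≤ i → i ≤ d → (p ^ f - 1 ∣ col p M i) ∧ (i < d → 0 < col p M i)

/-- The exponent of `t` contributed by `M`. -/
def weight (p d : ℕ) {k : ℕ} (M : Fin k → ℕ → ℕ) : ℕ :=
  ∑ i ∈ Finset.range (d + 1), (d - i) * col p M i

/-- The entries in row `j` summed over the columns `0, …, i`. -/
def pre {k : ℕ} (M : Fin k → ℕ → ℕ) (i j : ℕ) : ℕ := ∑ i' ∈ Finset.range (i + 1), ext M j i'

lemma mem_Mats {p k d : ℕ} {M : Fin k → ℕ → ℕ} : M ∈ Mats p k d ↔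
    ∀ j : Fin k, ∑ i ∈ Finset.range (d + 1), M j i = kdig p k j ∧ ∀ i, M j i ≠ 0 → i < d + 1 := by
  simp [Mats, Fintype.mem_piFinset, Finset.mem_piAntidiag]

lemma col_eq (p : ℕ) {k : ℕ} (M : Fin k → ℕ → ℕ) (i : ℕ) :
    col p M i = ∑ j ∈ Finset.range k, p ^ j * ext M j i := by
  rw [Finset.sum_range]
  simp [col, ext]

lemma weight_aux (c : ℕ → ℕ) (d : ℕ) : ∑ i ∈ Finset.range (d + 1), (d - i) * c i
    = ∑ i ∈ Finset.range d, ∑ i' ∈ Finset.range (i + 1), c i' := by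
  induction d with
  | zero => simp
  | succ d ih =>
    rw [Finset.sum_range_succ, Nat.sub_self, zero_mul, add_zero,
      Finset.sum_range_succ (fun i => ∑ i' ∈ Finset.range (i + 1), c i') d, ← ih,
      ← Finset.sum_add_distrib]
    refine Finset.sum_congr rfl fun i hi => ?_
    have := Finset.mem_range.mp hi
    rw [show d + 1 - i = d - i + 1 by omega]; ring

lemma sum_pre (p : ℕ) {k : ℕ} (M : Fin k → ℕ → ℕ) (i : ℕ) :
    ∑ j ∈ Finset.range k, p ^ j * pre M i j = ∑ i' ∈ Finset.range (i + 1), col p M i' := by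
  unfold pre
  simp_rw [Finset.mul_sum]
  rw [Finset.sum_comm]
  exact Finset.sum_congr rfl fun i' _ => (col_eq p M i').symm

/-- The weight is the sum of the values of the prefix sums `0, …, d - 1`. -/
lemma weight_eq (p d : ℕ) {k : ℕ} (M : Fin k → ℕ → ℕ) : weight p d M
    = ∑ i ∈ Finset.range d, ∑ j ∈ Finset.range k, p ^ j * pre M i j := by
  simp_rw [weight, weight_aux, sum_pre]

lemma pre_succ {k : ℕ} (M : Fin k → ℕ → ℕ) (i j : ℕ) :
    pre M (i + 1) j = pre M i j + ext M j (i + 1) := by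
  unfold pre; rw [Finset.sum_range_succ]

lemma pre_mono {k : ℕ} (M : Fin k → ℕ → ℕ) (j : ℕ) : Monotone fun i => pre M i j :=
  monotone_nat_of_le_succ fun i => by simp only [pre_succ]; omega

lemma pre_last {p k d : ℕ} {M : Fin k → ℕ → ℕ} (hM : M ∈ Mats p k d) {j : ℕ} (hj : j < k) :
    pre M d j = kdig p k j := by
  rw [← (mem_Mats.mp hM ⟨j, hj⟩).1]
  simp [pre, ext, hj]

lemma pre_le {p k d : ℕ} {M : Fin k → ℕ → ℕ} (hM : M ∈ Mats p k d) {i : ℕ} (hi : i ≤ d) (j : ℕ) :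
    pre M i j ≤ kdig p k j := by
  by_cases hj : j < k
  · rw [← pre_last hM hj]; exact pre_mono M j hi
  · simp [pre, ext, hj]

lemma pre_inj {p k d : ℕ} {M M' : Fin k → ℕ → ℕ} (hM : M ∈ Mats p k d) (hM' : M' ∈ Mats p k d)
    (h : ∀ i < d, ∀ j < k, pre M i j = pre M' i j) : M = M' := by
  have h' : ∀ i ≤ d, ∀ j < k, pre M i j = pre M' i j := fun i hi j hj => by
    rcases hi.lt_or_eq with hi | rfl
    · exact h i hi j hj
    · rw [pre_last hM hj, pre_last hM' hj]
  funext j i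
  by_cases hi : i ≤ d
  · rcases i with _ | i
    · have := h' 0 hi j j.2
      simpa [pre, ext] using this
    · have h1 := h' (i + 1) hi j j.2
      have h2 := h' i (by omega) j j.2
      rw [pre_succ, pre_succ, h2] at h1
      simpa [ext] using h1
  · have h1 := (mem_Mats.mp hM j).2 i
    have h2 := (mem_Mats.mp hM' j).2 i
    omega

lemma cls_mono (D : ℕ) {T T' : ℕ → ℤ} (h : ∀ j, T j ≤ T' j) (c : ZMod f) :
    cls D T c ≤ cls D T' c :=
  Finset.sum_le_sum fun j _ => by split_ifs; exacts [h j, le_rfl]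

/-- The quotient vector of the `i`-th prefix sum of `M`. -/
def xOf (f : ℕ) (p : ℕ) {k : ℕ} (M : Fin k → ℕ → ℕ) (i : ℕ) (b : ZMod f) : ℤ :=
  CC p (cls k (fun j => (pre M i j : ℤ))) b / ((p : ℤ) ^ f - 1)

lemma cast_Q {p : ℕ} (hp : 2 ≤ p) : ((p ^ f - 1 : ℕ) : ℤ) = (p : ℤ) ^ f - 1 := by
  rw [Nat.cast_sub (Nat.one_le_pow _ _ (by omega))]; push_cast; rfl

lemma pre_congr {p k d : ℕ} (hp : 2 ≤ p) {M : Fin k → ℕ → ℕ} (hM : M ∈ Mats p k d)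
    (hV : Valid p f d M) {i : ℕ} (hi : i ≤ d) : (p : ℤ) ^ f - 1 ∣
      CC (f := f) p (cls k (fun j => (pre M i j : ℤ))) 0 - CC p (Ntot (f := f) p k) 0 := by
  have hs : ∀ i, i ≤ d → (p : ℤ) ^ f - 1 ∣ ∑ j ∈ Finset.range k, (p : ℤ) ^ j * (pre M i j : ℤ)
      - ∑ j ∈ Finset.range k, (p : ℤ) ^ j * (pre M 0 j : ℤ) := by
    intro i
    induction i with
    | zero => intro _; simp
    | succ i ih =>
      intro hi
      have h1 := ih (by omega)
      have h2 := (hV (i + 1) (by omega) hi).1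
      rw [← Int.natCast_dvd_natCast, cast_Q hp, col_eq] at h2
      push_cast at h2
      obtain ⟨u, hu⟩ := dvd_add h1 h2
      refine ⟨u, ?_⟩
      rw [← hu]
      simp_rw [pre_succ]
      push_cast
      simp_rw [mul_add, Finset.sum_add_distrib]
      ring
  have h3 : Ntot (f := f) p k = cls k (fun j => (pre M d j : ℤ)) := by
    funext c
    unfold Ntot cls
    refine Finset.sum_congr rfl fun j hj => ?_
    simp only [pre_last hM (Finset.mem_range.mp hj)]
  rw [h3]
  have h4 := sum_congr_CC (f := f) p k (fun j => (pre M i j : ℤ))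
  have h5 := sum_congr_CC (f := f) p k (fun j => (pre M d j : ℤ))
  obtain ⟨u, h6⟩ := dvd_sub (dvd_add (dvd_sub (hs i hi) (hs d le_rfl)) h5) h4
  exact ⟨u, by linear_combination h6⟩

/-- The quotient vectors of the prefix sums of a valid matrix form a chain below `pot`. -/
lemma xOf_fam {p k d : ℕ} (hp : 2 ≤ p) {M : Fin k → ℕ → ℕ} (hM : M ∈ Mats p k d)
    (hV : Valid p f d M) : (sysK f p k hp).Fam d (pot p k) (xOf f p M) ∧
      ∀ i < d, (sysK f p k hp).cnt (xOf f p M i) = cls k (fun j => (pre M i j : ℤ)) := by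
  have hQ := Q_pos (f := f) hp
  have hc : ∀ i < d, (sysK f p k hp).cnt (xOf f p M i) = cls k (fun j => (pre M i j : ℤ)) :=
    fun i hi => cnt_of_congr hp (pre_congr hp hM hV hi.le)
  have hstep : ∀ i, i + 1 < d → ∀ c, xOf f p M i c ≤ xOf f p M (i + 1) c - 1 := by
    intro i hi c
    have hpos := (hV (i + 1) (by omega) hi.le).2 hi
    rw [col_eq, Finset.sum_pos_iff] at hpos
    obtain ⟨j, hj, hjp⟩ := hpos
    have hj0 : 0 < ext M j (i + 1) := Nat.pos_of_mul_pos_left hjp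
    have hle : ∀ j, (pre M i j : ℤ) ≤ pre M (i + 1) j := fun j => by
      exact_mod_cast pre_mono M j (Nat.le_succ i)
    have hlt : cls k (fun j => (pre M i j : ℤ)) (j : ZMod f)
        < cls k (fun j => (pre M (i + 1) j : ℤ)) (j : ZMod f) := by
      refine Finset.sum_lt_sum (fun j _ => by split_ifs; exacts [hle j, le_rfl]) ⟨j, hj, ?_⟩
      rw [if_pos rfl, if_pos rfl]
      simp only [pre_succ]
      push_cast; omega
    have h1 := CC_lt hp (fun c => cls_mono k hle c) hlt c
    have h2 := CC_congr p (n := cls k (fun j => (pre M i j : ℤ)))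
      (n' := cls k (fun j => (pre M (i + 1) j : ℤ))) (by
        obtain ⟨u, h6⟩ := dvd_sub (pre_congr hp hM hV (i := i) (by omega))
          (pre_congr hp hM hV (i := i + 1) hi.le)
        exact ⟨u, by linear_combination h6⟩) c
    have := div_lt_div_of_congr hQ h2 h1
    unfold xOf; omega
  refine ⟨fam_of _ (fun i hi => ?_) ?_ hstep ?_, hc⟩
  · unfold Feas
    rw [hc i hi]
    exact (val_le_sum (sysK f p k hp) (fun j => by positivity)
      (fun j => by exact_mod_cast pre_le hM hi.le j)).1
  · intro i
    induction i with
    | zero =>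
      intro _ c
      refine Int.ediv_nonneg ?_ hQ.le
      refine Finset.sum_nonneg fun r _ => mul_nonneg (by positivity) ?_
      exact Finset.sum_nonneg fun j _ => by split_ifs <;> positivity
    | succ i ih =>
      intro hi c
      have := ih (by omega) c
      have := hstep i hi c
      push_cast; omega
  · intro i hi c
    refine Int.ediv_le_ediv hQ (CC_mono p (fun c => cls_mono k (fun j => ?_) c) c)
    exact_mod_cast pre_le hM (by omega) j

end CoinSys

/-! ### The unique valid matrix of least weight -/

namespace CoinSys

variable {f : ℕ} [NeZero f]

/-- The matrix with columns `0, …, d` and prescribed prefix sums `t i j`. -/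
def ofPre (d k : ℕ) (t : ℕ → ℕ → ℕ) (j : Fin k) (i : ℕ) : ℕ :=
  if i ≤ d then t i j - (if i = 0 then 0 else t (i - 1) j) else 0

lemma pre_ofPre {d k : ℕ} {t : ℕ → ℕ → ℕ} (ht : ∀ i < d, ∀ j < k, t i j ≤ t (i + 1) j)
    {i j : ℕ} (hi : i ≤ d) (hj : j < k) : pre (ofPre d k t) i j = t i j := by
  induction i with
  | zero => simp [pre, ext, hj, ofPre]
  | succ i ih =>
    have := ht i (by omega) j hj
    rw [pre_succ, ih (by omega)]
    simp only [ext, hj, ofPre, hi, dite_true, if_true, Nat.add_sub_cancel, Nat.succ_ne_zero,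
      if_false]
    omega

lemma ofPre_mem {p d k : ℕ} {t : ℕ → ℕ → ℕ} (ht : ∀ i < d, ∀ j < k, t i j ≤ t (i + 1) j)
    (hd : ∀ j < k, t d j = kdig p k j) : ofPre d k t ∈ Mats p k d := by
  rw [mem_Mats]
  intro j
  refine ⟨?_, fun i hi => ?_⟩
  · rw [← hd j j.2, ← pre_ofPre ht le_rfl j.2]
    simp [pre, ext]
  · by_contra hcon
    exact hi (if_neg (by omega))

lemma w_le_of_cnt_le (S : CoinSys f) {x y : ZMod f → ℤ} (h : ∀ c, S.cnt x c ≤ S.cnt y c) :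
    S.w x ≤ S.w y := by
  unfold w
  rw [S.val_eq_sum_coin, S.val_eq_sum_coin]
  exact Finset.sum_le_sum fun j _ => mul_le_mul_of_nonneg_left (S.coin_mono (h _) _ _) (by positivity)

lemma cum_sysK {p k : ℕ} (hp : 2 ≤ p) (c : ZMod f) : (sysK f p k hp).cum c k = Ntot p k c := rfl

/-- The valid matrix of least weight is unique. It is obtained from the greedy chain below
`pot`, whose counts are nested and hence are the prefix sums of a matrix; `hu` guarantees that the
chain exists. -/
theorem exists_unique_min {p k d : ℕ} (hp : 2 ≤ p)
    (hu : ∀ b : ZMod f, ((d : ℤ) - 1) * ((p : ℤ) ^ f - 1) ≤ CC p (Ntot p k) b) :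
    ∃ M ∈ Mats p k d, Valid p f d M ∧ ∀ M' ∈ Mats p k d, Valid p f d M' →
      weight p d M ≤ weight p d M' ∧ (weight p d M' = weight p d M → M' = M) := by
  have hQ := Q_pos (f := f) hp
  set S := sysK f p k hp with hS
  have hSD : S.D = k := rfl
  have hSp : S.p = p := rfl
  have hAN : S.Adm (Ntot p k) := fun c => ⟨by
    rw [← cum_sysK hp]; exact S.cum_nonneg _ _, le_rfl⟩
  obtain ⟨x, hx⟩ := S.greedy_exists (l := d) (u := pot p k) fun _ => ⟨pot p k, by
    unfold Feas; rw [cnt_pot]; exact hAN, fun c =>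
      Int.le_ediv_of_mul_le hQ (hu c), fun c => le_rfl⟩
  obtain ⟨hx1, hx2⟩ := S.greedy_get hx
  have hfeas : ∀ i < d, S.Feas (x i) := fun i hi => (hx1 i hi).choose_spec.1
  let t : ℕ → ℕ → ℕ := fun i j => if i < d then (S.coin (S.cnt (x i) j) j j).toNat else kdig p k j
  have htc : ∀ i < d, ∀ j, (t i j : ℤ) = S.coin (S.cnt (x i) j) j j := fun i hi j => by
    simp only [t, hi, if_true]
    exact Int.toNat_of_nonneg (S.coin_nonneg _ _ _)
  have hcm : ∀ i, i + 1 < d → ∀ c, S.cnt (x i) c ≤ S.cnt (x (i + 1)) c := fun i hi c => by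
    obtain ⟨v, hv⟩ := hx1 (i + 1) hi
    push_cast at hv
    exact S.cnt_le_of_nested hv (hx2 i hi) c
  have ht : ∀ i < d, ∀ j < k, t i j ≤ t (i + 1) j := by
    intro i hi j hj
    zify
    rw [htc i hi]
    by_cases hi' : i + 1 < d
    · rw [htc _ hi']
      exact S.coin_mono (hcm i hi' _) _ _
    · simp only [t, hi', if_false]
      exact S.coin_le_dig _ _
  have htd : ∀ j < k, t d j = kdig p k j := fun j _ => by simp [t]
  have hM : ofPre d k t ∈ Mats p k d := ofPre_mem ht htd
  have hpre : ∀ i ≤ d, ∀ j < k, pre (ofPre d k t) i j = t i j := fun i hi j hj =>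
    pre_ofPre ht hi hj
  have hsum : ∀ i < d, ∑ j ∈ Finset.range k, (p : ℤ) ^ j * (pre (ofPre d k t) i j : ℤ)
      = S.w (x i) := fun i hi => by
    unfold w
    rw [S.val_eq_sum_coin]
    refine Finset.sum_congr rfl fun j hj => ?_
    rw [hpre i hi.le j (Finset.mem_range.mp hj), htc i hi, hSp]
  have hcg : ∀ i ≤ d, (p : ℤ) ^ f - 1 ∣
      ∑ j ∈ Finset.range k, (p : ℤ) ^ j * (pre (ofPre d k t) i j : ℤ) - CC p S.ν 0 := by
    have gen : ∀ y : ZMod f → ℤ, S.Feas y → ∀ T : ℕ → ℤ, cls k T = S.cnt y →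
        (p : ℤ) ^ f - 1 ∣ ∑ j ∈ Finset.range k, (p : ℤ) ^ j * T j - CC p S.ν 0 := by
      intro y hy T hT
      have h1 := sum_congr_CC (f := f) p k T
      have h2 := CC_cnt S y 0
      rw [hT] at h1
      rw [hSp] at h2
      rw [h2] at h1
      obtain ⟨u, h3⟩ := dvd_add h1 (dvd_mul_right ((p : ℤ) ^ f - 1) (y 0))
      exact ⟨u, by linear_combination h3⟩
    intro i hi
    have hcls : ∀ T T' : ℕ → ℤ, (∀ j < k, T j = T' j) → cls (f := f) k T = cls k T' := by
      intro T T' h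
      funext c
      exact Finset.sum_congr rfl fun j hj => by rw [h j (Finset.mem_range.mp hj)]
    rcases hi.lt_or_eq with hi | rfl
    · refine gen (x i) (hfeas i hi) _ ?_
      rw [← S.cls_coin (hfeas i hi)]
      exact hcls _ _ fun j hj => by rw [hpre i hi.le j hj, htc i hi]
    · refine gen (pot p k) (by unfold Feas; rw [cnt_pot]; exact hAN) _ ?_
      rw [cnt_pot]
      exact hcls _ _ fun j hj => by rw [hpre i le_rfl j hj, htd j hj]
  have hcolZ : ∀ i, (col p (ofPre d k t) (i + 1) : ℤ)
      = ∑ j ∈ Finset.range k, (p : ℤ) ^ j * (pre (ofPre d k t) (i + 1) j : ℤ)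
        - ∑ j ∈ Finset.range k, (p : ℤ) ^ j * (pre (ofPre d k t) i j : ℤ) := fun i => by
    rw [col_eq]
    push_cast
    simp_rw [pre_succ]
    push_cast
    simp_rw [mul_add, Finset.sum_add_distrib]
    ring
  refine ⟨ofPre d k t, hM, ?_, ?_⟩
  · intro i hi1 hid
    obtain ⟨i, rfl⟩ : ∃ i', i = i' + 1 := ⟨i - 1, by omega⟩
    refine ⟨?_, fun hid' => ?_⟩
    · rw [← Int.natCast_dvd_natCast, cast_Q hp, hcolZ]
      obtain ⟨u, h3⟩ := dvd_sub (hcg (i + 1) hid) (hcg i (by omega))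
      exact ⟨u, by linear_combination h3⟩
    · zify
      rw [hcolZ, hsum _ hid', hsum i (by omega)]
      have h1 := w_le_of_cnt_le S (hcm i hid')
      refine sub_pos.mpr (lt_of_le_of_ne h1 fun h => ?_)
      have h2 := congrFun (S.w_inj (hfeas i (by omega)) (hfeas _ hid') h) 0
      have h3 := (hx2 i hid').2.2.1 0
      simp only at h3
      omega
  · intro M' hM' hV'
    obtain ⟨hF, hc⟩ := xOf_fam hp hM' hV'
    obtain ⟨ho1, ho2⟩ := S.greedy_optimal hx hF
    have hv : ∀ i < d, _ := fun i (hi : i < d) => S.val_le_sum (T := fun j => (pre M' i j : ℤ))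
      (fun j => by positivity) (fun j => by exact_mod_cast pre_le hM' hi.le j)
    have hw : ∀ i ∈ Finset.range d, S.w (xOf f p M' i)
        ≤ ∑ j ∈ Finset.range k, (p : ℤ) ^ j * (pre M' i j : ℤ) := fun i hi => by
      have hi := Finset.mem_range.mp hi
      unfold w
      rw [hc i hi]
      exact (hv i hi).2.1
    have hW : (weight p d (ofPre d k t) : ℤ) = ∑ i ∈ Finset.range d, S.w (x i) := by
      rw [weight_eq]
      push_cast
      exact Finset.sum_congr rfl fun i hi => hsum i (Finset.mem_range.mp hi)
    have hW' : (weight p d M' : ℤ) = ∑ i ∈ Finset.range d,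
        ∑ j ∈ Finset.range k, (p : ℤ) ^ j * (pre M' i j : ℤ) := by
      rw [weight_eq]; push_cast; rfl
    have hle := Finset.sum_le_sum hw
    refine ⟨by zify; rw [hW, hW']; exact ho1.trans hle, fun heq => ?_⟩
    have heq' : (weight p d M' : ℤ) = weight p d (ofPre d k t) := by exact_mod_cast heq
    rw [hW, hW'] at heq'
    have e1 := ho2 (by linarith)
    have e2 := (Finset.sum_eq_sum_iff_of_le hw).mp (by linarith)
    refine pre_inj hM' hM fun i hi j hj => ?_
    have e3 := e2 i (Finset.mem_range.mpr hi)
    unfold w at e3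
    rw [hc i hi] at e3
    have e4 := (hv i hi).2.2 e3 j hj
    have e5 := hc i hi
    rw [← e1 i hi] at e5
    zify
    rw [hpre i hi.le j hj, htc i hi, e5]
    exact e4

end CoinSys

/-! ### Merging columns, and digit sums -/

namespace CoinSys

variable {f : ℕ} [NeZero f]

/-- Adding column `d + 1` to column `d`. -/
def merge (d : ℕ) {k : ℕ} (M : Fin k → ℕ → ℕ) (j : Fin k) (i : ℕ) : ℕ :=
  if i < d then M j i else if i = d then M j d + M j (d + 1) else 0

/-- Merging the last two columns keeps a matrix valid and lowers its weight, because column `d`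
is nonzero. -/
lemma merge_spec {p k d : ℕ} (hd : 1 ≤ d) {M : Fin k → ℕ → ℕ} (hM : M ∈ Mats p k (d + 1))
    (hV : Valid p f (d + 1) M) : merge d M ∈ Mats p k d ∧ Valid p f d (merge d M) ∧
      weight p d (merge d M) < weight p (d + 1) M := by
  have hlt : ∀ i < d, col p (merge d M) i = col p M i := fun i hi => by
    simp [col, merge, hi]
  have heq : col p (merge d M) d = col p M d + col p M (d + 1) := by
    simp [col, merge, mul_add, Finset.sum_add_distrib]
  refine ⟨mem_Mats.mpr fun j => ⟨?_, fun i hi => ?_⟩, fun i hi1 hid => ?_, ?_⟩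
  · rw [← (mem_Mats.mp hM j).1, Finset.sum_range_succ, Finset.sum_range_succ _ (d + 1),
      Finset.sum_range_succ _ d, add_assoc]
    congr 1
    · exact Finset.sum_congr rfl fun i hi => if_pos (Finset.mem_range.mp hi)
    · simp [merge]
  · by_contra hcon
    apply hi
    unfold merge
    rw [if_neg (by omega), if_neg (by omega)]
  · rcases hid.lt_or_eq with h | rfl
    · rw [hlt i h]
      exact ⟨(hV i hi1 (by omega)).1, fun _ => (hV i hi1 (by omega)).2 (by omega)⟩
    · rw [heq]
      exact ⟨dvd_add (hV i hi1 (by omega)).1 (hV (i + 1) (by omega) le_rfl).1,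
        fun h => absurd h (lt_irrefl _)⟩
  · have hpos := (hV d hd (by omega)).2 (by omega)
    unfold weight
    rw [Finset.sum_range_succ, Finset.sum_range_succ _ (d + 1), Finset.sum_range_succ _ d]
    have : ∑ i ∈ Finset.range d, (d - i) * col p (merge d M) i
        ≤ ∑ i ∈ Finset.range d, (d + 1 - i) * col p M i :=
      Finset.sum_le_sum fun i hi => by
        rw [hlt i (Finset.mem_range.mp hi)]
        exact Nat.mul_le_mul_right _ (by omega)
    have h2 : d + 1 - d = 1 := by omega
    rw [h2]
    simp only [Nat.sub_self, zero_mul, one_mul]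
    omega

/-- The sum of the base-`q` digits of `n`. -/
def dsum (q n : ℕ) : ℕ := (Nat.digits q n).sum

lemma dsum_step {q : ℕ} (hq : 2 ≤ q) (n : ℕ) : dsum q n = n % q + dsum q (n / q) := by
  unfold dsum
  rcases Nat.eq_zero_or_pos n with rfl | hn
  · simp
  · rw [Nat.digits_def' (by omega) hn, List.sum_cons]

/-- Subadditivity of the digit sum, with a carry `e` for the induction. -/
lemma dsum_add_carry {q : ℕ} (hq : 2 ≤ q) (n : ℕ) : ∀ a b e : ℕ, a + b ≤ n → e ≤ 1 →
    dsum q (a + b + e) ≤ dsum q a + dsum q b + e := by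
  induction n using Nat.strong_induction_on with
  | _ n ih =>
    intro a b e hab he
    rcases Nat.eq_zero_or_pos (a + b) with h0 | h0
    · obtain ⟨rfl, rfl⟩ : a = 0 ∧ b = 0 := by omega
      have : dsum q (0 + 0 + e) ≤ 0 + 0 + e := Nat.digit_sum_le _ _
      omega
    · have hq0 : 0 < q := by omega
      have ha := Nat.div_add_mod a q
      have hb := Nat.div_add_mod b q
      have ha' := Nat.mod_lt a hq0
      have hb' := Nat.mod_lt b hq0
      have hs := Nat.div_add_mod (a % q + b % q + e) q
      have hs' := Nat.mod_lt (a % q + b % q + e) hq0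
      have hs1 : (a % q + b % q + e) / q ≤ 1 := by
        refine Nat.le_of_lt_succ (Nat.div_lt_of_lt_mul ?_)
        omega
      have e1 : a + b + e = (a % q + b % q + e) + q * (a / q + b / q) := by
        rw [mul_add]; omega
      have hlt : a / q + b / q < a + b := by
        rcases Nat.eq_zero_or_pos a with rfl | ha0
        · have := Nat.div_lt_self (n := b) (k := q) (by omega) (by omega)
          simpa using this
        · have := Nat.div_lt_self ha0 (k := q) (by omega)
          have := Nat.div_le_self b q
          omega
      have h := ih (a / q + b / q) (by omega) (a / q) (b / q) ((a % q + b % q + e) / q) le_rfl hs1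
      rw [dsum_step hq (a + b + e), dsum_step hq a, dsum_step hq b]
      have e2 : (a + b + e) % q = (a % q + b % q + e) % q := by
        rw [e1, Nat.add_mul_mod_self_left]
      have e3 : (a + b + e) / q = a / q + b / q + (a % q + b % q + e) / q := by
        rw [e1, Nat.add_mul_div_left _ _ hq0]; omega
      rw [e2, e3]
      have : (a % q + b % q + e) / q ≤ q * ((a % q + b % q + e) / q) :=
        Nat.le_mul_of_pos_left _ hq0
      omega

lemma dsum_add {q : ℕ} (hq : 2 ≤ q) (a b : ℕ) : dsum q (a + b) ≤ dsum q a + dsum q b :=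
  dsum_add_carry hq _ a b 0 le_rfl (by omega)

lemma dsum_mul_pow {q : ℕ} (hq : 2 ≤ q) (a m : ℕ) : dsum q (a * q ^ m) = dsum q a := by
  induction m with
  | zero => simp
  | succ m ih =>
    rw [dsum_step hq, pow_succ, ← mul_assoc, Nat.mul_mod_left, Nat.mul_div_cancel _ (by omega), ih,
      zero_add]

lemma dsum_sum {q : ℕ} (hq : 2 ≤ q) (s : Finset ℕ) (g : ℕ → ℕ) :
    dsum q (∑ j ∈ s, g j) ≤ ∑ j ∈ s, dsum q (g j) :=
  Finset.le_sum_of_subadditive (dsum q) (by simp [dsum]) (dsum_add hq) s g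

/-- The digit sum of `k * p ^ i` is at most the cyclic sum starting at class `-i`: each digit of
`k` contributes a power of `p` whose exponent may be reduced modulo `f`, and digit sums are
subadditive. -/
lemma dsum_le_CC {p : ℕ} (hp : 2 ≤ p) (k : ℕ) (b : ZMod f) :
    (dsum (p ^ f) (k * p ^ (-b).val) : ℤ) ≤ CC p (Ntot p k) b := by
  have hq : 2 ≤ p ^ f := hp.trans (Nat.le_self_pow (NeZero.ne f) p)
  unfold Ntot
  rw [CC_cls]
  have h1 : k * p ^ (-b).val = ∑ j ∈ Finset.range k, kdig p k j * p ^ (j + (-b).val) := by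
    conv_lhs => rw [← sum_kdig hp k]
    rw [Finset.sum_mul]
    exact Finset.sum_congr rfl fun j _ => by rw [pow_add]; ring
  have h2 : dsum (p ^ f) (k * p ^ (-b).val)
      ≤ ∑ j ∈ Finset.range k, kdig p k j * p ^ ((j : ZMod f) - b).val := by
    rw [h1]
    refine (dsum_sum hq _ _).trans (Finset.sum_le_sum fun j _ => ?_)
    have h3 : ((j : ZMod f) - b).val = (j + (-b).val) % f := by
      rw [← ZMod.val_natCast]
      push_cast
      rw [ZMod.natCast_zmod_val, sub_eq_add_neg]
    rw [h3]
    conv_lhs => rw [← Nat.mod_add_div (j + (-b).val) f, pow_add, pow_mul, ← mul_assoc,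
      dsum_mul_pow hq]
    exact Nat.digit_sum_le _ _
  exact_mod_cast h2

end CoinSys

/-! ### Expansion of the restricted power sum -/

namespace CoinSys

section Algebra
variable {F : Type} [Field F] [Fintype F]

/-- Writing `k = ∑ k_j p ^ j`, the power is the product over `j` of the `k_j`-th powers of
Frobenius twists, and each factor is expanded by the multinomial theorem. -/
lemma poly_pow_expand {p : ℕ} [Fact p.Prime] [CharP F p] (d k : ℕ) (g : ℕ → F) :
    (∑ n ∈ Finset.range (d + 1), C (g n) * (X : F[X]) ^ (d - n)) ^ k =
      ∑ M ∈ Mats p k d, C ((∏ j : Fin k, (Nat.multinomial (Finset.range (d + 1)) (M j) : F)) *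
        ∏ n ∈ Finset.range (d + 1), g n ^ col p M n) * X ^ weight p d M := by
  have hp : p.Prime := Fact.out
  have h1 : ∀ a : F[X], a ^ k = ∏ j : Fin k, (a ^ p ^ (j : ℕ)) ^ kdig p k j := by
    intro a
    conv_lhs => rw [← sum_kdig hp.two_le k]
    rw [Finset.sum_range, ← Finset.prod_pow_eq_pow_sum]
    exact Finset.prod_congr rfl fun j _ => pow_mul _ _ _
  rw [h1]
  simp_rw [sum_pow_char_pow, Finset.sum_pow_eq_sum_piAntidiag]
  rw [Finset.prod_univ_sum]
  refine Finset.sum_congr rfl fun M _ => ?_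
  rw [Finset.prod_mul_distrib, Finset.prod_comm, map_mul, mul_assoc]
  congr 1
  · rw [map_prod]
    exact Finset.prod_congr rfl fun j _ => (map_natCast C _).symm
  · rw [map_prod, weight, ← Finset.prod_pow_eq_pow_sum, ← Finset.prod_mul_distrib]
    refine Finset.prod_congr rfl fun n _ => ?_
    rw [map_pow, pow_mul, ← mul_pow, col, ← Finset.prod_pow_eq_pow_sum]
    exact Finset.prod_congr rfl fun j _ => (pow_mul _ _ _).symm

lemma monicPoly_pow {p : ℕ} [Fact p.Prime] [CharP F p] (d k : ℕ) (c : Fin d → F) :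
    monicPoly F d c ^ k =
      ∑ M ∈ Mats p k d, C ((∏ j : Fin k, (Nat.multinomial (Finset.range (d + 1)) (M j) : F)) *
        ∏ m : Fin d, c m ^ col p M (d - m)) * X ^ weight p d M := by
  let e : ℕ → F := fun m => if h : m < d then c ⟨m, h⟩ else 1
  have he : e d = 1 := by simp [e]
  have he' : ∀ m : Fin d, e m = c m := fun m => by simp [e]
  have hrefl : ∀ {R : Type} [CommMonoid R] (u : ℕ → R), ∏ n ∈ Finset.range (d + 1), u n
      = (∏ m : Fin d, u (d - m)) * u 0 := by
    intro R _ u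
    rw [← Finset.prod_range_reflect, Finset.prod_range_succ, Finset.prod_range]
    simp
  have hreflS : ∀ {R : Type} [AddCommMonoid R] (u : ℕ → R), ∑ n ∈ Finset.range (d + 1), u n
      = (∑ m : Fin d, u (d - m)) + u 0 := by
    intro R _ u
    rw [← Finset.sum_range_reflect, Finset.sum_range_succ, Finset.sum_range]
    simp
  have h1 : monicPoly F d c
      = ∑ n ∈ Finset.range (d + 1), C (e (d - n)) * (X : F[X]) ^ (d - n) := by
    rw [hreflS, monicPoly, add_comm]
    congr 1
    · refine Finset.sum_congr rfl fun m _ => ?_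
      rw [Nat.sub_sub_self m.2.le, he']
    · rw [Nat.sub_zero, he]; simp
  rw [h1, poly_pow_expand (p := p)]
  refine Finset.sum_congr rfl fun M _ => ?_
  rw [hrefl, Nat.sub_zero, he, one_pow, mul_one]
  congr 3
  refine Finset.prod_congr rfl fun m _ => ?_
  rw [Nat.sub_sub_self m.2.le, he']

lemma X_dvd_monicPoly {d : ℕ} (hd : 1 ≤ d) (c : Fin d → F) :
    X ∣ monicPoly F d c ↔ c ⟨0, hd⟩ = 0 := by
  rw [X_dvd_iff, coeff_zero_eq_eval_zero, monicPoly]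
  simp only [eval_add, eval_pow, eval_X, eval_finsetSum, eval_mul, eval_C]
  rw [Finset.sum_eq_single ⟨0, hd⟩, zero_pow (by omega)]
  · simp
  · intro b _ hb
    rw [zero_pow, mul_zero]
    intro h
    exact hb (Fin.ext h)
  · simp

/-- The values taken by the coefficient of `X ^ m` of a monic polynomial not divisible by `X`; only the
constant coefficient is restricted. -/
noncomputable def Tset (F : Type) [Field F] [Fintype F] (m : ℕ) : Finset F :=
  if m = 0 then Finset.univ \ {0} else Finset.univ

/-- The coefficient with which the matrix `M` contributes to the restricted power sum. Column `d - m`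
belongs to the coefficient of `X ^ m`. -/
noncomputable def coef (F : Type) [Field F] [Fintype F] (p d : ℕ) {k : ℕ} (M : Fin k → ℕ → ℕ) : F :=
  (∏ j : Fin k, (Nat.multinomial (Finset.range (d + 1)) (M j) : F)) *
    ∏ m : Fin d, ∑ x ∈ Tset F m, x ^ col p M (d - m)

lemma rPowerSum_expand {p : ℕ} [Fact p.Prime] [CharP F p] {d : ℕ} (hd : 1 ≤ d) (k : ℕ) :
    rPowerSum F X d k = ∑ M ∈ Mats p k d, C (coef F p d M) * X ^ weight p d M := by
  have h1 : rPowerSum F X d k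
      = ∑ c ∈ Fintype.piFinset (fun m : Fin d => Tset F m), monicPoly F d c ^ k := by
    rw [rPowerSum, ← Finset.sum_filter_not_add_sum_filter _ (fun c : Fin d → F => X ∣ monicPoly F d c)]
    rw [Finset.sum_congr (s₁ := Finset.univ.filter _) rfl
      (fun c hc => if_pos (Finset.mem_filter.mp hc).2), Finset.sum_const_zero, add_zero]
    refine Finset.sum_congr ?_ fun c hc => ?_
    · ext c
      rw [Finset.mem_filter, X_dvd_monicPoly hd, Fintype.mem_piFinset]
      constructor
      · rintro ⟨_, h⟩ m
        unfold Tset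
        split_ifs with hm
        · have : m = ⟨0, hd⟩ := Fin.ext hm
          simpa [this] using h
        · simp
      · intro h
        have := h ⟨0, hd⟩
        simpa [Tset] using this
    · rw [Fintype.mem_piFinset] at hc
      rw [if_neg]
      rw [X_dvd_monicPoly hd]
      have := hc ⟨0, hd⟩
      simpa [Tset] using this
  rw [h1]
  simp_rw [monicPoly_pow (p := p)]
  rw [Finset.sum_comm]
  refine Finset.sum_congr rfl fun M _ => ?_
  rw [← Finset.sum_mul, ← map_sum, ← Finset.mul_sum, coef, Finset.prod_univ_sum]

lemma sum_pow_ne_zero (n : ℕ) :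
    (∑ x ∈ (Finset.univ \ {0} : Finset F), x ^ n) = if Fintype.card F - 1 ∣ n then -1 else 0 := by
  rw [← FiniteField.sum_pow_units F n]
  let φ : Fˣ ↪ F := ⟨fun x ↦ x, Units.val_injective⟩
  have : Finset.univ.map φ = Finset.univ \ {0} := by
    ext x
    simpa only [Finset.mem_map, Finset.mem_univ, Function.Embedding.coeFn_mk, true_and,
      Finset.mem_sdiff, Finset.mem_singleton, φ] using! isUnit_iff_ne_zero
  rw [← this, Finset.sum_map]
  rfl

lemma sum_pow_univ {n : ℕ} (hn : 0 < n) :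
    (∑ x : F, x ^ n) = if Fintype.card F - 1 ∣ n then -1 else 0 := by
  rw [← sum_pow_ne_zero, ← Finset.sum_sdiff (Finset.subset_univ ({0} : Finset F)),
    Finset.sum_singleton, zero_pow hn.ne', add_zero]

lemma sum_Tset_ne_zero (m n : ℕ) : (∑ x ∈ Tset F m, x ^ n) ≠ 0 ↔
    Fintype.card F - 1 ∣ n ∧ (m ≠ 0 → 0 < n) := by
  unfold Tset
  split_ifs with h
  · rw [sum_pow_ne_zero]; simp [h]
  · rcases Nat.eq_zero_or_pos n with rfl | hn
    · simp [h]
    · rw [sum_pow_univ hn]; simp [hn]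

/-- The multinomial coefficients of digits below `p` are units, and the power sums over the
field or its nonzero elements are nonzero under the divisibility and positivity conditions in
`Valid`. -/
lemma coef_ne_zero {p f d k : ℕ} [Fact p.Prime] [CharP F p] (hF : Fintype.card F = p ^ f)
    {M : Fin k → ℕ → ℕ} (hM : M ∈ Mats p k d) : coef F p d M ≠ 0 ↔ Valid p f d M := by
  have hp : p.Prime := Fact.out
  have hm : (∏ j : Fin k, (Nat.multinomial (Finset.range (d + 1)) (M j) : F)) ≠ 0 := by
    refine Finset.prod_ne_zero_iff.mpr fun j _ h => ?_
    rw [CharP.cast_eq_zero_iff F p] at h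
    have h1 := h.trans (Dvd.intro_left _ (Nat.multinomial_spec (Finset.range (d + 1)) (M j)))
    rw [(mem_Mats.mp hM j).1, hp.dvd_factorial] at h1
    have : kdig p k j < p := Nat.mod_lt _ hp.pos
    omega
  rw [coef, mul_ne_zero_iff, and_iff_right hm, Finset.prod_ne_zero_iff]
  simp only [Finset.mem_univ, true_implies]
  constructor
  · intro h i hi1 hid
    have := (sum_Tset_ne_zero _ _).mp (h ⟨d - i, by omega⟩)
    simp only [hF] at this
    rw [show d - (d - i) = i by omega] at this
    exact ⟨this.1, fun hlt => this.2 (by omega)⟩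
  · intro h m
    have := h (d - m) (by omega) (by omega)
    refine (sum_Tset_ne_zero _ _).mpr ⟨hF ▸ this.1, fun hm0 => this.2 (by omega)⟩

end Algebra

/-- A unique term of least degree cannot be cancelled. -/
lemma natTrailingDegree_of_min {F : Type} [Field F] {ι : Type} (s : Finset ι) (a : ι → F)
    (w : ι → ℕ) {i₀ : ι} (hi : i₀ ∈ s) (h0 : a i₀ ≠ 0)
    (hmin : ∀ i ∈ s, a i ≠ 0 → w i₀ ≤ w i ∧ (w i = w i₀ → i = i₀)) :
    (∑ i ∈ s, C (a i) * X ^ w i) ≠ 0 ∧ (∑ i ∈ s, C (a i) * X ^ w i).natTrailingDegree = w i₀ := by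
  have hc : ∀ n, (∑ i ∈ s, C (a i) * X ^ w i).coeff n = ∑ i ∈ s, if n = w i then a i else 0 := by
    intro n
    simp [coeff_C_mul, coeff_X_pow]
  have h1 : (∑ i ∈ s, C (a i) * X ^ w i).coeff (w i₀) = a i₀ := by
    rw [hc, Finset.sum_eq_single i₀, if_pos rfl]
    · intro i his hne
      split_ifs with h
      · by_contra h2
        exact hne ((hmin i his h2).2 h.symm)
      · rfl
    · exact fun h => absurd hi h
  have hne : (∑ i ∈ s, C (a i) * X ^ w i) ≠ 0 := fun h => by
    rw [h, coeff_zero] at h1; exact h0 h1.symm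
  refine ⟨hne, le_antisymm (natTrailingDegree_le_of_ne_zero (by rwa [h1])) ?_⟩
  refine le_natTrailingDegree hne fun n hn => ?_
  rw [hc]
  refine Finset.sum_eq_zero fun i his => ?_
  split_ifs with h
  · by_contra h2
    have := (hmin i his h2).1
    omega
  · rfl

/-- The restricted power sum is nonzero and its valuation is the least weight of a valid matrix. -/
lemma rPowerSum_spec {p f : ℕ} (hp : p.Prime) (hf : 0 < f) {F : Type} [Field F] [Fintype F]
    (hF : Fintype.card F = p ^ f) (k : ℕ) {d : ℕ} (hd : 1 ≤ d)
    (hL : (d : ℤ) ≤ ⌊Lval (p ^ f) p f k⌋ + 1) :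
    rPowerSum F X d k ≠ 0 ∧ ∃ M ∈ Mats p k d, Valid p f d M ∧
      (rPowerSum F X d k).natTrailingDegree = weight p d M ∧
      ∀ M' ∈ Mats p k d, Valid p f d M' → weight p d M ≤ weight p d M' := by
  have : Fact p.Prime := ⟨hp⟩
  have : NeZero f := ⟨hf.ne'⟩
  have : CharP F p := charP_of_card_eq_prime_pow hF
  have hQ := Q_pos (f := f) hp.two_le
  have hu : ∀ b : ZMod f, ((d : ℤ) - 1) * ((p : ℤ) ^ f - 1) ≤ CC p (Ntot p k) b := by
    intro b
    refine le_trans ?_ (dsum_le_CC hp.two_le k b)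
    have h1 : Lval (p ^ f) p f k
        ≤ (dsum (p ^ f) (k * p ^ (-b).val) : ℚ) / (((p ^ f : ℕ) : ℚ) - 1) := by
      refine Finset.inf'_le (fun i => ((Nat.digits (p ^ f) (k * p ^ i)).sum : ℚ) /
        (((p ^ f : ℕ) : ℚ) - 1)) (Finset.mem_Icc.mpr ⟨Nat.zero_le _, ?_⟩)
      have := ZMod.val_lt (-b)
      omega
    have h2 : (((d : ℤ) - 1 : ℤ) : ℚ) ≤ Lval (p ^ f) p f k := Int.le_floor.mp (by omega)
    have hQ' : (0 : ℚ) < ((p ^ f : ℕ) : ℚ) - 1 := by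
      have : (0 : ℚ) < (((p : ℤ) ^ f - 1 : ℤ) : ℚ) := by exact_mod_cast hQ
      push_cast at this ⊢
      exact this
    have h3 := (le_div_iff₀ hQ').mp (h2.trans h1)
    have h4 : (((((d : ℤ) - 1) * ((p : ℤ) ^ f - 1) : ℤ)) : ℚ)
        ≤ ((dsum (p ^ f) (k * p ^ (-b).val) : ℤ) : ℚ) := by
      push_cast at h3 ⊢
      exact h3
    exact_mod_cast h4
  obtain ⟨M, hM, hV, hmin⟩ := exists_unique_min hp.two_le hu
  rw [rPowerSum_expand (p := p) hd]
  obtain ⟨h1, h2⟩ := natTrailingDegree_of_min (Mats p k d) (coef F p d) (weight p d) hM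
    ((coef_ne_zero hF hM).mpr hV) fun M' hM' hne => hmin M' hM' ((coef_ne_zero hF hM').mp hne)
  exact ⟨h1, M, hM, hV, h2, fun M' hM' hV' => (hmin M' hM' hV').1⟩

lemma rPowerSum_zero {F : Type} [Field F] [Fintype F] (k : ℕ) : rPowerSum F X 0 k = 1 := by
  have h : ¬ (X : F[X]) ∣ 1 := fun h => Polynomial.not_isUnit_X (isUnit_of_dvd_one h)
  simp [rPowerSum, monicPoly, h]

end CoinSys

theorem stmt13 (p f q : ℕ) (hp : p.Prime) (hf : 0 < f) (hq : q = p ^ f)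
    (F : Type) [Field F] [Fintype F] (hF : Fintype.card F = q)
    (k : ℕ) (hk : 0 < k) :
    (∀ d : ℕ, (d : ℤ) ≤ ⌊Lval q p f k⌋ + 1 → rPowerSum F X d k ≠ 0) ∧
    (rPowerSum F X 0 k).natTrailingDegree = 0 ∧
    (rPowerSum F X 0 k).natTrailingDegree ≤ (rPowerSum F X 1 k).natTrailingDegree ∧
    ∀ d : ℕ, 1 ≤ d → (d : ℤ) ≤ ⌊Lval q p f k⌋ →
      (rPowerSum F X d k).natTrailingDegree
        < (rPowerSum F X (d + 1) k).natTrailingDegree := by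
  subst hq
  have h0 := CoinSys.rPowerSum_zero (F := F) k
  refine ⟨fun d hd => ?_, by rw [h0, natTrailingDegree_one], by
    rw [h0, natTrailingDegree_one]; exact Nat.zero_le _, fun d hd hL => ?_⟩
  · rcases Nat.eq_zero_or_pos d with rfl | hd0
    · rw [h0]; exact one_ne_zero
    · exact (CoinSys.rPowerSum_spec hp hf hF k hd0 hd).1
  · have : NeZero f := ⟨hf.ne'⟩
    obtain ⟨_, M, hM, hV, hw, hmin⟩ := CoinSys.rPowerSum_spec hp hf hF k hd (by omega)
    obtain ⟨_, M₁, hM₁, hV₁, hw₁, _⟩ :=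
      CoinSys.rPowerSum_spec hp hf hF k (d := d + 1) (by omega) (by push_cast; omega)
    obtain ⟨hmem, hval, hlt⟩ := CoinSys.merge_spec hd hM₁ hV₁
    rw [hw, hw₁]
    exact (hmin _ hmem hval).trans_lt hlt
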